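/- For every V > 0 there exist constants K > 0 and C > 0 such that for all ν with 0 ≤ ν ≤ V, every integer k ≥ K, and every j that is the k-th positive zero of J_ν, one has | j·g(ν/j) − (k − 1/4) | ≤ C/(ν + k). -/

import Mathlib

open Real MeasureTheory Set

/-- The Bessel function of the first kind of order `ν ≥ 0`, for `x > 0`, via the
integral representation. -/
noncomputable def besselJ (ν x : ℝ) : ℝ :=
  (1 / π) * (∫ θ in (0:ℝ)..π, Real.cos (x * Real.sin θ - ν * θ)) -
    (Real.sin (ν * π) / π) * ∫ t in Set.Ioi (0:ℝ), Real.exp (-x * Real.sinh t - ν * t)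

/-- The function `g(t) = (√(1-t²) - t arccos t)/π`. -/
noncomputable def gfun (t : ℝ) : ℝ := (Real.sqrt (1 - t ^ 2) - t * Real.arccos t) / π

/-- `j` is the `k`-th positive zero of `J_ν`: `j > 0`, `J_ν(j) = 0`, and there are exactly
`k - 1` zeros of `J_ν` in `(0, j)`. -/
def IsKthZero (ν : ℝ) (k : ℕ) (j : ℝ) : Prop :=
  0 < j ∧ besselJ ν j = 0 ∧ {x : ℝ | 0 < x ∧ x < j ∧ besselJ ν x = 0}.ncard = k - 1

/-!
Deforming Schläfli's integral to the path of steepest descent through the saddle point of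
`exp (i x cosh z)` shows that `J_ν = Re H_ν` on `(0, ∞)`, with `H_ν` the Hankel function. Laplace's
method on that path gives `arg H_ν(x) = x - νπ/2 - π/4 + O(1/x)`, uniformly for bounded `ν`.

By the recurrences for `H_ν`, the function `x * Im (H_ν * conj H_{ν+1})` is constant, and positive
by the asymptotics. Hence `H_ν` has no zeros, its phase `θ` is strictly increasing, and the zeros
of `J_ν` are the points where `θ ∈ π/2 + πℤ`. Near the origin `|θ| < π/2`: for `-1 < ν ≤ 0` this is
read off the integral representations, and it passes from `ν` to `ν + 1` because the phases of
neighbouring orders differ by an angle in `(0, π)`. So `θ = (k - 1/2) π` at the `k`-th zero `j`,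
that is, `j/π - ν/2 = k - 1/4 + O(1/j)`, while `j g(ν/j) = j/π - ν/2 + O(ν²/j)` by Taylor expansion
of `g`.
-/

namespace BesselZeros

open Filter Topology Complex

/-! ### Preliminaries on one real variable -/

section Preliminaries

lemma one_add_sq_div_two_le_cosh (s : ℝ) : 1 + s ^ 2 / 2 ≤ Real.cosh s := by
  have half_angle : Real.cosh s = 1 + 2 * Real.sinh (s / 2) ^ 2 := by
    have h := Real.cosh_two_mul (s / 2)
    rw [mul_div_cancel₀ s two_ne_zero, Real.cosh_sq'] at h
    linarith
  have sq_le : (s / 2) ^ 2 ≤ Real.sinh (s / 2) ^ 2 := by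
    rw [sq_le_sq, Real.abs_sinh]
    exact Real.self_le_sinh_iff.2 (abs_nonneg _)
  linarith

lemma sinh_mul_sin_nonneg {a b : ℝ} (hab : 0 ≤ a * b) (hb : |b| ≤ π) :
    0 ≤ Real.sinh a * Real.sin b := by
  obtain ⟨hb₁, hb₂⟩ := abs_le.1 hb
  rcases mul_nonneg_iff.1 hab with ⟨ha, hb₀⟩ | ⟨ha, hb₀⟩
  · exact mul_nonneg (Real.sinh_nonneg_iff.2 ha) (Real.sin_nonneg_of_nonneg_of_le_pi hb₀ hb₂)
  · exact mul_nonneg_of_nonpos_of_nonpos (Real.sinh_nonpos_iff.2 ha)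
      (Real.sin_nonpos_of_nonpos_of_neg_pi_le hb₀ hb₁)

lemma norm_cosh_sub_one_le (z : ℂ) : ‖Complex.cosh z - 1‖ ≤ ‖z‖ ^ 2 * Real.exp ‖z‖ := by
  have taylor (u : ℂ) : ‖Complex.exp u - (1 + u)‖ ≤ ‖u‖ ^ 2 * Real.exp ‖u‖ := by
    simpa [Finset.sum_range_succ] using Complex.norm_exp_sub_sum_le_norm_mul_exp u 2
  have average : Complex.cosh z - 1 =
      ((Complex.exp z - (1 + z)) + (Complex.exp (-z) - (1 + -z))) / 2 := by
    rw [Complex.cosh]; ring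
  have h_neg := taylor (-z)
  rw [norm_neg] at h_neg
  rw [average, norm_div, Complex.norm_ofNat, div_le_iff₀ two_pos]
  linarith [norm_add_le (Complex.exp z - (1 + z)) (Complex.exp (-z) - (1 + -z)), taylor z]

lemma abs_lt_pi_div_two_of_cos_pos {y : ℝ} (hy : |y| ≤ π + π / 2) (hcos : 0 < Real.cos y) :
    |y| < π / 2 := by
  by_contra! h
  exact hcos.not_ge (Real.cos_abs y ▸ Real.cos_nonpos_of_pi_div_two_le_of_le h hy)

lemma abs_le_pi_div_two_mul_abs_sin {y : ℝ} (hy : |y| ≤ π / 2) : |y| ≤ π / 2 * |Real.sin y| := by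
  have h := Real.mul_abs_le_abs_sin hy
  rwa [div_mul_eq_mul_div, div_le_iff₀ pi_pos, ← le_div_iff₀' two_pos, mul_comm,
    mul_div_right_comm] at h

lemma eq_of_hasDerivAt_zero {E : Type*} [NormedAddCommGroup E] [NormedSpace ℝ E] {s : Set ℝ}
    (hs : IsOpen s) (hs' : IsPreconnected s) {f : ℝ → E} (hf : ∀ x ∈ s, HasDerivAt f 0 x)
    {x y : ℝ} (hx : x ∈ s) (hy : y ∈ s) : f x = f y :=
  hs.is_const_of_deriv_eq_zero hs'
    (fun z hz => (hf z hz).differentiableAt.differentiableWithinAt)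
    (fun z hz => (hf z hz).deriv) hx hy

section Preconnected

variable {α : Type*} [TopologicalSpace α] {s : Set α} {f : α → ℝ}

lemma mapsTo_Ioo_of_isPreconnected (hs : IsPreconnected s) (hf : ContinuousOn f s) {a b : ℝ}
    (ha : ∀ x ∈ s, f x ≠ a) (hb : ∀ x ∈ s, f x ≠ b) {x₀ : α} (hx₀ : x₀ ∈ s)
    (h₀ : f x₀ ∈ Ioo a b) : MapsTo f s (Ioo a b) := by
  have ivt := (hs.image f hf).ordConnected
  intro x hx
  by_contra h
  rw [mem_Ioo, not_and_or, not_lt, not_lt] at h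
  rcases h with h | h
  · obtain ⟨y, hy, hya⟩ := ivt.out (mem_image_of_mem f hx) (mem_image_of_mem f hx₀) ⟨h, h₀.1.le⟩
    exact ha y hy hya
  · obtain ⟨y, hy, hyb⟩ := ivt.out (mem_image_of_mem f hx₀) (mem_image_of_mem f hx) ⟨h₀.2.le, h⟩
    exact hb y hy hyb

lemma abs_lt_pi_div_two_of_isPreconnected (hs : IsPreconnected s) (hf : ContinuousOn f s)
    (hcos : ∀ x ∈ s, 0 < Real.cos (f x)) {x₀ : α} (hx₀ : x₀ ∈ s) (h₀ : |f x₀| < π / 2) {x : α}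
    (hx : x ∈ s) : |f x| < π / 2 := by
  refine abs_lt.2 (mapsTo_Ioo_of_isPreconnected hs hf ?_ ?_ hx₀ (abs_lt.1 h₀) hx) <;>
    intro y hy h <;> simpa [h] using hcos y hy

lemma mem_Ioo_zero_pi_of_isPreconnected (hs : IsPreconnected s) (hf : ContinuousOn f s)
    (hsin : ∀ x ∈ s, 0 < Real.sin (f x)) {x₀ : α} (hx₀ : x₀ ∈ s) (h₀ : f x₀ ∈ Ioo 0 π) {x : α}
    (hx : x ∈ s) : f x ∈ Ioo 0 π := by
  refine mapsTo_Ioo_of_isPreconnected hs hf ?_ ?_ hx₀ h₀ hx <;>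
    intro y hy h <;> simpa [h] using hsin y hy

end Preconnected

lemma integral_comp_mul_deriv_of_primitive {F f : ℂ → ℂ} (hF : ∀ z, HasDerivAt F (f z) z)
    (hf : Continuous f) {γ γ' : ℝ → ℂ} (hγ : ∀ s, HasDerivAt γ (γ' s) s) (hγ' : Continuous γ')
    (a b : ℝ) : ∫ s in a..b, f (γ s) * γ' s = F (γ b) - F (γ a) := by
  have hγ_cont : Continuous γ := continuous_iff_continuousAt.2 fun s => (hγ s).continuousAt
  exact intervalIntegral.integral_eq_sub_of_hasDerivAt
    (fun s _ => (hF (γ s)).comp_of_eq s (hγ s) rfl)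
    (((hf.comp hγ_cont).mul hγ').intervalIntegrable a b)

section OpenInterval

variable {s : Set ℝ}

lemma exists_hasDerivAt_of_continuousOn {E : Type*} [NormedAddCommGroup E] [NormedSpace ℝ E]
    [CompleteSpace E] (hs : IsOpen s) (hs' : s.OrdConnected) {f : ℝ → E} (hf : ContinuousOn f s) :
    ∃ F : ℝ → E, ∀ x ∈ s, HasDerivAt F (f x) x := by
  rcases s.eq_empty_or_nonempty with rfl | ⟨c, hc⟩
  · exact ⟨0, by simp⟩
  exact ⟨fun x => ∫ t in c..x, f t, fun x hx =>
    intervalIntegral.integral_hasDerivAt_right (hf.mono (hs'.uIcc_subset hc hx)).intervalIntegrable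
      (hf.stronglyMeasurableAtFilter hs x hx) (hf.continuousAt (hs.mem_nhds hx))⟩

lemma exists_eq_const_mul_exp (hs : IsOpen s) (hs' : s.OrdConnected) {h D Λ : ℝ → ℂ}
    (hh : ∀ x ∈ s, HasDerivAt h (D x * h x) x) (hΛ : ∀ x ∈ s, HasDerivAt Λ (D x) x) :
    ∃ c : ℂ, ∀ x ∈ s, h x = c * Complex.exp (Λ x) := by
  rcases s.eq_empty_or_nonempty with rfl | ⟨x₀, hx₀⟩
  · exact ⟨0, by simp⟩
  refine ⟨h x₀ * Complex.exp (-Λ x₀), fun x hx => ?_⟩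
  have hderiv (y : ℝ) (hy : y ∈ s) : HasDerivAt (fun y => h y * Complex.exp (-Λ y)) 0 y :=
    ((hh y hy).mul (hΛ y hy).neg.cexp).congr_deriv (by simp only [Pi.neg_apply]; ring)
  rw [← eq_of_hasDerivAt_zero hs hs'.isPreconnected hderiv hx hx₀, mul_assoc, ← Complex.exp_add,
    neg_add_cancel, Complex.exp_zero, mul_one]

lemma exists_continuous_arg (hs : IsOpen s) (hs' : s.OrdConnected) {h D : ℝ → ℂ}
    (hh : ∀ x ∈ s, HasDerivAt h (D x * h x) x) (hD : ContinuousOn D s) : ∃ θ : ℝ → ℝ, ∀ x ∈ s,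
      HasDerivAt θ (D x).im x ∧ h x = (‖h x‖ : ℂ) * Complex.exp (θ x * I) := by
  obtain ⟨Λ, hΛ⟩ := exists_hasDerivAt_of_continuousOn hs hs' hD
  obtain ⟨c, hc⟩ := exists_eq_const_mul_exp hs hs' hh hΛ
  refine ⟨fun x => arg c + (Λ x).im, fun x hx =>
    ⟨(Complex.imCLM.hasFDerivAt.comp_hasDerivAt x (hΛ x hx)).const_add _, ?_⟩⟩
  calc h x = (‖c‖ * Complex.exp (arg c * I)) * Complex.exp ((Λ x).re + (Λ x).im * I) := by
        rw [norm_mul_exp_arg_mul_I, re_add_im, hc x hx]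
    _ = (‖c‖ * Complex.exp (Λ x).re) * Complex.exp ((arg c + (Λ x).im : ℝ) * I) := by
        push_cast
        rw [add_mul, Complex.exp_add, Complex.exp_add]
        ring
    _ = (‖h x‖ : ℂ) * Complex.exp ((arg c + (Λ x).im : ℝ) * I) := by
        rw [hc x hx, norm_mul, Complex.norm_exp, ofReal_mul, ofReal_exp]

end OpenInterval

lemma exists_nat_eq_of_cos_eq_zero {y : ℝ} (hcos : Real.cos y = 0) (hy : -(π / 2) < y) :
    ∃ m : ℕ, y = (2 * m + 1) * π / 2 := by
  obtain ⟨n, rfl⟩ := Real.cos_eq_zero_iff.1 hcos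
  have hn : (-1 : ℝ) < n := by nlinarith [pi_pos]
  lift n to ℕ using by exact_mod_cast hn
  exact ⟨n, by push_cast; rfl⟩

lemma ncard_zeros_cos_comp {θ : ℝ → ℝ} {a j : ℝ} (hθ : ContinuousOn θ (Ioi a))
    (hmono : StrictMonoOn θ (Ioi a)) (hlower : ∀ x ∈ Ioi a, -(π / 2) < θ x)
    (hsmall : ∃ x ∈ Ioi a, θ x < π / 2) (hj : a < j) {m : ℕ} (hm : θ j = (2 * m + 1) * π / 2) :
    {x | a < x ∧ x < j ∧ Real.cos (θ x) = 0}.ncard = m := by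
  have hv : StrictMono fun i : ℕ => (2 * (i : ℝ) + 1) * π / 2 := fun i i' hi => by
    have : (i : ℝ) < i' := mod_cast hi
    dsimp only
    gcongr
  have himage : θ '' {x | a < x ∧ x < j ∧ Real.cos (θ x) = 0} =
      (fun i : ℕ => (2 * (i : ℝ) + 1) * π / 2) '' Finset.range m := by
    ext y
    constructor
    · rintro ⟨x, ⟨hx, hxj, hcos⟩, rfl⟩
      obtain ⟨i, hi⟩ := exists_nat_eq_of_cos_eq_zero hcos (hlower x hx)
      have hlt := hmono hx hj hxj
      rw [hi, hm] at hlt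
      exact ⟨i, by simpa using hv.lt_iff_lt.1 hlt, hi.symm⟩
    · rintro ⟨i, hi, rfl⟩
      obtain ⟨x₀, hx₀, hlt⟩ := hsmall
      have above : (2 * (i : ℝ) + 1) * π / 2 < θ j := hm ▸ hv (by simpa using hi)
      have below : θ x₀ < (2 * (i : ℝ) + 1) * π / 2 := by
        have : 0 ≤ (i : ℝ) * π := by positivity
        linarith
      have hxj : x₀ < j := (hmono.lt_iff_lt hx₀ hj).1 (below.trans above)
      obtain ⟨x, hx, hxi⟩ := intermediate_value_Ioo hxj.le
        (hθ.mono fun y hy => lt_of_lt_of_le hx₀ hy.1) ⟨below, above⟩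
      exact ⟨x, ⟨lt_trans hx₀ hx.1, hx.2, Real.cos_eq_zero_iff.2 ⟨i, by simpa using hxi⟩⟩, hxi⟩
  rw [← (hmono.injOn.mono fun x hx => hx.1).ncard_image, himage,
    ncard_image_of_injective _ hv.injective, ncard_coe_finset, Finset.card_range]

end Preliminaries

/-! ### The steepest descent path and the Hankel function -/

section SteepestDescent

/-- The Gudermannian function, the height of the steepest descent path `Re (cosh z) = 1` above
the real axis. -/
noncomputable def gudermannian (s : ℝ) : ℝ := Real.arctan (Real.sinh s)

/-- The rate at which `exp (i x cosh z)` decays along the steepest descent path: on it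
`cosh z = 1 + i * descentRate`. -/
noncomputable def descentRate (s : ℝ) : ℝ := Real.cosh s - 1 / Real.cosh s

/-- The path of steepest descent of `exp (i x cosh z)` through the saddle point `z = 0`,
parametrised by the real part. -/
noncomputable def descentPath (s : ℝ) : ℂ := s + gudermannian s * I

/-- The velocity of `descentPath`. -/
noncomputable def descentVelocity (s : ℝ) : ℂ := 1 + (1 / Real.cosh s : ℝ) * I

lemma cos_gudermannian (s : ℝ) : Real.cos (gudermannian s) = 1 / Real.cosh s := by
  rw [gudermannian, Real.cos_arctan, ← Real.cosh_sq', Real.sqrt_sq (Real.cosh_pos s).le]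

lemma sin_gudermannian (s : ℝ) : Real.sin (gudermannian s) = Real.sinh s / Real.cosh s := by
  rw [gudermannian, Real.sin_arctan, ← Real.cosh_sq', Real.sqrt_sq (Real.cosh_pos s).le]

lemma gudermannian_neg (s : ℝ) : gudermannian (-s) = -gudermannian s := by simp [gudermannian]

lemma hasDerivAt_gudermannian (s : ℝ) : HasDerivAt gudermannian (1 / Real.cosh s) s := by
  refine (Real.hasDerivAt_sinh s).arctan.congr_deriv ?_
  rw [← Real.cosh_sq']
  field_simp [(Real.cosh_pos s).ne']

lemma one_div_cosh_pos (s : ℝ) : 0 < 1 / Real.cosh s := one_div_pos.2 (Real.cosh_pos s)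

lemma one_div_cosh_le_one (s : ℝ) : 1 / Real.cosh s ≤ 1 :=
  (div_le_one (Real.cosh_pos s)).2 (Real.one_le_cosh s)

lemma continuous_one_div_cosh : Continuous fun s : ℝ => 1 / Real.cosh s :=
  continuous_const.div Real.continuous_cosh fun s => (Real.cosh_pos s).ne'

lemma abs_gudermannian_lt (s : ℝ) : |gudermannian s| < π / 2 :=
  abs_lt.2 ⟨Real.neg_pi_div_two_lt_arctan _, Real.arctan_lt_pi_div_two _⟩

lemma mul_gudermannian_nonneg (s : ℝ) : 0 ≤ s * gudermannian s := by
  rcases le_total 0 s with h | h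
  · exact mul_nonneg h (Real.arctan_nonneg.2 (Real.sinh_nonneg_iff.2 h))
  · exact mul_nonneg_of_nonpos_of_nonpos h (Real.arctan_le_zero.2 (Real.sinh_nonpos_iff.2 h))

lemma abs_gudermannian_le (s : ℝ) : |gudermannian s| ≤ |s| := by
  have h := convex_univ.norm_image_sub_le_of_norm_hasDerivWithin_le (C := 1) (x := 0) (y := s)
    (fun x _ => (hasDerivAt_gudermannian x).hasDerivWithinAt)
    (fun x _ => by
      rw [Real.norm_of_nonneg (one_div_cosh_pos x).le]
      exact one_div_cosh_le_one x)
    (mem_univ _) (mem_univ _)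
  simpa [gudermannian] using h

lemma sq_div_two_le_descentRate (s : ℝ) : s ^ 2 / 2 ≤ descentRate s := by
  unfold descentRate
  linarith [one_add_sq_div_two_le_cosh s, one_div_cosh_le_one s]

lemma descentRate_nonneg (s : ℝ) : 0 ≤ descentRate s :=
  le_trans (by positivity) (sq_div_two_le_descentRate s)

lemma continuous_descentRate : Continuous descentRate :=
  Real.continuous_cosh.sub continuous_one_div_cosh

lemma descentPath_re (s : ℝ) : (descentPath s).re = s := by simp [descentPath]

lemma descentPath_im (s : ℝ) : (descentPath s).im = gudermannian s := by simp [descentPath]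

lemma descentPath_zero : descentPath 0 = 0 := by simp [descentPath, gudermannian]

lemma descentPath_neg (s : ℝ) : descentPath (-s) = -descentPath s := by
  simp [descentPath, gudermannian_neg, add_comm]

lemma norm_descentPath_le (s : ℝ) : ‖descentPath s‖ ≤ 2 * |s| := by
  have h := Complex.norm_le_abs_re_add_abs_im (descentPath s)
  rw [descentPath_re, descentPath_im] at h
  linarith [abs_gudermannian_le s]

lemma hasDerivAt_descentPath (s : ℝ) : HasDerivAt descentPath (descentVelocity s) s :=
  (hasDerivAt_id s).ofReal_comp.add ((hasDerivAt_gudermannian s).ofReal_comp.mul_const I)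

lemma continuous_descentPath : Continuous descentPath :=
  continuous_iff_continuousAt.2 fun s => (hasDerivAt_descentPath s).continuousAt

lemma descentVelocity_neg (s : ℝ) : descentVelocity (-s) = descentVelocity s := by
  simp [descentVelocity]

lemma continuous_descentVelocity : Continuous descentVelocity :=
  continuous_const.add ((continuous_ofReal.comp continuous_one_div_cosh).mul continuous_const)

lemma norm_descentVelocity_le (s : ℝ) : ‖descentVelocity s‖ ≤ 2 := by
  refine (norm_add_le _ _).trans ?_
  rw [norm_mul, norm_I, mul_one, norm_one, norm_real, Real.norm_of_nonneg (one_div_cosh_pos s).le]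
  linarith [one_div_cosh_le_one s]

lemma cosh_descentPath (s : ℝ) : Complex.cosh (descentPath s) = 1 + descentRate s * I := by
  have hc : (Real.cosh s : ℂ) ≠ 0 := mod_cast (Real.cosh_pos s).ne'
  have hsq : (Real.cosh s : ℂ) ^ 2 = 1 + (Real.sinh s : ℂ) ^ 2 := mod_cast Real.cosh_sq' s
  rw [descentPath, Complex.cosh_add, Complex.cosh_mul_I, Complex.sinh_mul_I, ← ofReal_cos,
    ← ofReal_sin, cos_gudermannian, sin_gudermannian, ← ofReal_cosh, ← ofReal_sinh, descentRate]
  push_cast only [ofReal_div, ofReal_sub, ofReal_one]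
  field_simp
  linear_combination -I * hsq

/-- The Gaussian-type majorant `exp (-x * descentRate s + c * |s|)` of the integrands below. -/
noncomputable def descentMajorant (x c s : ℝ) : ℝ := Real.exp (-x * descentRate s + c * |s|)

lemma descentMajorant_le_gaussian {x : ℝ} (hx : 0 < x) (c s : ℝ) :
    descentMajorant x c s ≤ Real.exp (c ^ 2 / x) * Real.exp (-(x / 4) * s ^ 2) := by
  rw [descentMajorant, ← Real.exp_add, Real.exp_le_exp]
  have rate := mul_le_mul_of_nonneg_left (sq_div_two_le_descentRate s) hx.le
  have am_gm : c * |s| ≤ c ^ 2 / x + x / 4 * s ^ 2 := by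
    have h : 0 ≤ (c - x / 2 * |s|) ^ 2 / x := by positivity
    have hexpand : (c - x / 2 * |s|) ^ 2 / x = c ^ 2 / x - c * |s| + x / 4 * s ^ 2 := by
      rw [← sq_abs s]; field_simp; ring
    linarith
  linarith

lemma continuous_descentMajorant (x c : ℝ) : Continuous (descentMajorant x c) := by
  have := continuous_descentRate
  unfold descentMajorant
  fun_prop

lemma descentMajorant_le_of_le {x y : ℝ} (h : y ≤ x) (c s : ℝ) :
    descentMajorant x c s ≤ descentMajorant y c s := by
  have := mul_le_mul_of_nonneg_right h (descentRate_nonneg s)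
  exact Real.exp_le_exp.2 (by linarith)

lemma descentMajorant_le_of_le_right {c d : ℝ} (h : c ≤ d) (x s : ℝ) :
    descentMajorant x c s ≤ descentMajorant x d s :=
  Real.exp_le_exp.2 (by gcongr)

lemma integrable_descentMajorant {x : ℝ} (hx : 0 < x) (c : ℝ) :
    Integrable (descentMajorant x c) := by
  refine ((integrable_exp_neg_mul_sq (by positivity : 0 < x / 4)).const_mul
    (Real.exp (c ^ 2 / x))).mono' (continuous_descentMajorant x c).aestronglyMeasurable
    (ae_of_all _ fun s => ?_)
  rw [descentMajorant, Real.norm_of_nonneg (Real.exp_pos _).le]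
  exact descentMajorant_le_gaussian hx c s

lemma tendsto_descentMajorant {x : ℝ} (hx : 0 < x) (c : ℝ) {l : Filter ℝ}
    (hl : Tendsto (fun s => |s|) l atTop) : Tendsto (descentMajorant x c) l (𝓝 0) := by
  have gaussian :
      Tendsto (fun s : ℝ => Real.exp (c ^ 2 / x) * Real.exp (-(x / 4 * |s| ^ 2))) l (𝓝 0) := by
    rw [← mul_zero (Real.exp (c ^ 2 / x))]
    exact (Real.tendsto_exp_neg_atTop_nhds_zero.comp
      (((tendsto_pow_atTop two_ne_zero).comp hl).const_mul_atTop (by positivity))).const_mul _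
  refine squeeze_zero (fun s => (Real.exp_pos _).le) (fun s => ?_) gaussian
  simpa only [sq_abs, neg_mul] using descentMajorant_le_gaussian hx c s

/-- The integrand of Sommerfeld's representation of the Hankel function. -/
noncomputable def sommerfeldIntegrand (ν x : ℝ) (z : ℂ) : ℂ :=
  Complex.exp (I * x * Complex.cosh z - ν * z)

lemma sommerfeldIntegrand_add (ν μ x : ℝ) (z : ℂ) :
    sommerfeldIntegrand (ν + μ) x z = Complex.exp (-(μ * z)) * sommerfeldIntegrand ν x z := by
  rw [sommerfeldIntegrand, sommerfeldIntegrand, ← Complex.exp_add]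
  push_cast
  ring_nf

lemma cosh_mul_sommerfeldIntegrand (ν x : ℝ) (z : ℂ) :
    Complex.cosh z * sommerfeldIntegrand ν x z =
      (sommerfeldIntegrand (ν - 1) x z + sommerfeldIntegrand (ν + 1) x z) / 2 := by
  rw [sub_eq_add_neg, sommerfeldIntegrand_add, sommerfeldIntegrand_add, Complex.cosh]
  push_cast
  ring_nf

lemma sinh_mul_sommerfeldIntegrand (ν x : ℝ) (z : ℂ) :
    Complex.sinh z * sommerfeldIntegrand ν x z =
      (sommerfeldIntegrand (ν - 1) x z - sommerfeldIntegrand (ν + 1) x z) / 2 := by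
  rw [sub_eq_add_neg ν, sommerfeldIntegrand_add, sommerfeldIntegrand_add, Complex.sinh]
  push_cast
  ring_nf

lemma hasDerivAt_sommerfeldIntegrand (ν x : ℝ) (z : ℂ) : HasDerivAt (sommerfeldIntegrand ν x)
    ((I * x * Complex.sinh z - ν) * sommerfeldIntegrand ν x z) z := by
  have h := (((Complex.hasDerivAt_cosh z).const_mul (I * x)).sub
    ((hasDerivAt_id z).const_mul (ν : ℂ))).cexp
  refine h.congr_deriv ?_
  simp only [Pi.sub_apply, id, sommerfeldIntegrand]
  ring

lemma hasDerivAt_sommerfeldIntegrand_param (ν x : ℝ) (z : ℂ) :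
    HasDerivAt (fun y : ℝ => sommerfeldIntegrand ν y z)
      (I * (Complex.cosh z * sommerfeldIntegrand ν x z)) x := by
  have h := ((((hasDerivAt_id x).ofReal_comp.const_mul I).mul_const (Complex.cosh z)).sub_const
    ((ν : ℂ) * z)).cexp
  refine h.congr_deriv ?_
  simp only [id, sommerfeldIntegrand, ofReal_one]
  ring

lemma continuous_sommerfeldIntegrand (ν x : ℝ) : Continuous (sommerfeldIntegrand ν x) :=
  continuous_iff_continuousAt.2 fun z => (hasDerivAt_sommerfeldIntegrand ν x z).continuousAt

lemma sommerfeldIntegrand_descentPath (ν x s : ℝ) : sommerfeldIntegrand ν x (descentPath s) =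
    Complex.exp (x * I) * (Real.exp (-x * descentRate s) * Complex.exp (-(ν * descentPath s))) := by
  rw [sommerfeldIntegrand, cosh_descentPath, ofReal_exp, ← Complex.exp_add, ← Complex.exp_add]
  congr 1
  push_cast
  linear_combination (x * descentRate s : ℂ) * I_sq

lemma norm_sommerfeldIntegrand_descentPath_le (ν x s : ℝ) :
    ‖sommerfeldIntegrand ν x (descentPath s)‖ ≤ descentMajorant x |ν| s := by
  rw [sommerfeldIntegrand_descentPath, norm_mul, norm_exp_ofReal_mul_I, one_mul, norm_mul,
    norm_real, Real.norm_of_nonneg (Real.exp_pos _).le, Complex.norm_exp, ← Real.exp_add,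
    descentMajorant, Real.exp_le_exp, neg_re, re_ofReal_mul, descentPath_re, ← abs_mul]
  linarith [neg_abs_le (ν * s)]

/-- The integrand of the steepest descent integral, in the real parameter of the path. -/
noncomputable def descentKernel (ν x s : ℝ) : ℂ :=
  sommerfeldIntegrand ν x (descentPath s) * descentVelocity s

lemma descentKernel_neg (ν x s : ℝ) : descentKernel ν x (-s) = descentKernel (-ν) x s := by
  simp [descentKernel, sommerfeldIntegrand, descentPath_neg, descentVelocity_neg]

lemma norm_descentKernel_le (ν x s : ℝ) :
    ‖descentKernel ν x s‖ ≤ 2 * descentMajorant x |ν| s := by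
  rw [descentKernel, norm_mul, mul_comm]
  gcongr
  exacts [norm_descentVelocity_le s, norm_sommerfeldIntegrand_descentPath_le ν x s]

lemma continuous_descentKernel (ν x : ℝ) : Continuous (descentKernel ν x) :=
  ((continuous_sommerfeldIntegrand ν x).comp continuous_descentPath).mul continuous_descentVelocity

lemma integrable_descentKernel (ν : ℝ) {x : ℝ} (hx : 0 < x) : Integrable (descentKernel ν x) :=
  ((integrable_descentMajorant hx |ν|).const_mul 2).mono'
    (continuous_descentKernel ν x).aestronglyMeasurable
    (ae_of_all _ fun s => norm_descentKernel_le ν x s)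

/-- Sommerfeld's integral along the path of steepest descent. -/
noncomputable def descentIntegral (ν x : ℝ) : ℂ := ∫ s, descentKernel ν x s

lemma hasDerivAt_descentKernel (ν x s : ℝ) : HasDerivAt (fun y => descentKernel ν y s)
    (I / 2 * (descentKernel (ν - 1) x s + descentKernel (ν + 1) x s)) x := by
  refine ((hasDerivAt_sommerfeldIntegrand_param ν x _).mul_const
    (descentVelocity s)).congr_deriv ?_
  rw [cosh_mul_sommerfeldIntegrand, descentKernel, descentKernel]
  ring

lemma hasDerivAt_descentIntegral (ν : ℝ) {x : ℝ} (hx : 0 < x) : HasDerivAt (descentIntegral ν)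
    (I / 2 * (descentIntegral (ν - 1) x + descentIntegral (ν + 1) x)) x := by
  have hhalf : 0 < x / 2 := half_pos hx
  have kernel_le {μ y : ℝ} (hμ : |μ| ≤ |ν| + 1) (hy : x / 2 < y) (s : ℝ) :
      ‖descentKernel μ y s‖ ≤ 2 * descentMajorant (x / 2) (|ν| + 1) s := by
    refine (norm_descentKernel_le μ y s).trans (mul_le_mul_of_nonneg_left ?_ two_pos.le)
    exact (descentMajorant_le_of_le hy.le _ s).trans (descentMajorant_le_of_le_right hμ _ s)
  have hpred : |ν - 1| ≤ |ν| + 1 := by simpa using abs_sub ν 1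
  have hsucc : |ν + 1| ≤ |ν| + 1 := by simpa using abs_add_le ν 1
  have h := (hasDerivAt_integral_of_dominated_loc_of_deriv_le (Ioi_mem_nhds (half_lt_self hx))
    (bound := fun s => 2 * descentMajorant (x / 2) (|ν| + 1) s)
    (Eventually.of_forall fun y => (continuous_descentKernel ν y).aestronglyMeasurable)
    (integrable_descentKernel ν hx)
    (((continuous_descentKernel (ν - 1) x).add
      (continuous_descentKernel (ν + 1) x)).const_mul (I / 2)).aestronglyMeasurable
    (ae_of_all _ fun s y hy => ?_) ((integrable_descentMajorant hhalf _).const_mul 2)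
    (ae_of_all _ fun s y _ => hasDerivAt_descentKernel ν y s)).2
  · rwa [integral_const_mul, integral_add (integrable_descentKernel _ hx)
      (integrable_descentKernel _ hx)] at h
  · rw [norm_mul, norm_div, norm_I, Complex.norm_ofNat]
    linarith [norm_add_le (descentKernel (ν - 1) y s) (descentKernel (ν + 1) y s),
      kernel_le hpred hy s, kernel_le hsucc hy s]

lemma two_mul_descentIntegral (ν : ℝ) {x : ℝ} (hx : 0 < x) : 2 * ν * descentIntegral ν x =
    I * x * (descentIntegral (ν - 1) x - descentIntegral (ν + 1) x) := by
  have hderiv (s : ℝ) : HasDerivAt (fun s => sommerfeldIntegrand ν x (descentPath s))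
      (I * x / 2 * (descentKernel (ν - 1) x s - descentKernel (ν + 1) x s)
        - ν * descentKernel ν x s) s := by
    refine ((hasDerivAt_sommerfeldIntegrand ν x _).comp_of_eq s
      (hasDerivAt_descentPath s) rfl).congr_deriv ?_
    rw [sub_mul, mul_assoc _ (Complex.sinh _), sinh_mul_sommerfeldIntegrand]
    simp only [descentKernel]
    ring
  have hdiff : Integrable fun s =>
      I * x / 2 * (descentKernel (ν - 1) x s - descentKernel (ν + 1) x s) :=
    ((integrable_descentKernel _ hx).sub (integrable_descentKernel _ hx)).const_mul _
  have hmul := (integrable_descentKernel ν hx).const_mul (ν : ℂ)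
  have decay {l : Filter ℝ} (hl : Tendsto (fun s => |s|) l atTop) :
      Tendsto (fun s => sommerfeldIntegrand ν x (descentPath s)) l (𝓝 0) :=
    squeeze_zero_norm (norm_sommerfeldIntegrand_descentPath_le ν x)
      (tendsto_descentMajorant hx _ hl)
  have h := integral_of_hasDerivAt_of_tendsto hderiv (hdiff.sub hmul)
    (decay tendsto_abs_atBot_atTop) (decay tendsto_abs_atTop_atTop)
  rw [integral_sub hdiff hmul, integral_const_mul, integral_const_mul,
    integral_sub (integrable_descentKernel _ hx) (integrable_descentKernel _ hx), sub_zero] at h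
  simp only [descentIntegral]
  linear_combination -2 * h

/-- The Hankel function `H_ν⁽¹⁾ (x)`, for `x > 0`. -/
noncomputable def hankelH (ν x : ℝ) : ℂ :=
  1 / π * Complex.exp (-((ν + 1) * π / 2 : ℝ) * I) * descentIntegral ν x

lemma hankelH_sub_one (ν x : ℝ) : hankelH (ν - 1) x =
    1 / π * Complex.exp (-((ν + 1) * π / 2 : ℝ) * I) * (I * descentIntegral (ν - 1) x) := by
  have hshift : -((ν - 1 + 1) * π / 2 : ℝ) * I =
      -((ν + 1) * π / 2 : ℝ) * I + (π / 2 * I) := by push_cast; ring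
  rw [hankelH, hshift, Complex.exp_add, exp_pi_div_two_mul_I]
  ring

lemma hankelH_add_one (ν x : ℝ) : hankelH (ν + 1) x =
    1 / π * Complex.exp (-((ν + 1) * π / 2 : ℝ) * I) * (-I * descentIntegral (ν + 1) x) := by
  have hshift : -((ν + 1 + 1) * π / 2 : ℝ) * I =
      -((ν + 1) * π / 2 : ℝ) * I + (-π / 2 * I) := by push_cast; ring
  rw [hankelH, hshift, Complex.exp_add, exp_neg_pi_div_two_mul_I]
  ring

lemma hankelH_sub_one_add_hankelH_add_one (ν : ℝ) {x : ℝ} (hx : 0 < x) :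
    hankelH (ν - 1) x + hankelH (ν + 1) x = 2 * (ν / x : ℝ) * hankelH ν x := by
  have hx' : (x : ℂ) ≠ 0 := mod_cast hx.ne'
  rw [hankelH_sub_one, hankelH_add_one, hankelH]
  push_cast
  field_simp
  linear_combination -two_mul_descentIntegral ν hx

lemma hasDerivAt_hankelH (ν : ℝ) {x : ℝ} (hx : 0 < x) :
    HasDerivAt (hankelH ν) ((ν / x : ℝ) * hankelH ν x - hankelH (ν + 1) x) x := by
  refine ((hasDerivAt_descentIntegral ν hx).const_mul _).congr_deriv ?_
  linear_combination (1 / 2 : ℂ) * hankelH_sub_one_add_hankelH_add_one ν hx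
    - (1 / 2 : ℂ) * hankelH_sub_one ν x + (1 / 2 : ℂ) * hankelH_add_one ν x

lemma hasDerivAt_hankelH' (ν : ℝ) {x : ℝ} (hx : 0 < x) :
    HasDerivAt (hankelH ν) (hankelH (ν - 1) x - (ν / x : ℝ) * hankelH ν x) x :=
  (hasDerivAt_hankelH ν hx).congr_deriv
    (by linear_combination -hankelH_sub_one_add_hankelH_add_one ν hx)

end SteepestDescent

/-! ### The Bessel function as the real part of the Hankel function -/

section Contour

/-- The integral over the infinite horizontal leg of the contour, which also occurs in the
definition of `besselJ`. -/
noncomputable def besselTail (ν x : ℝ) : ℝ :=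
  ∫ t in Ioi (0 : ℝ), Real.exp (-x * Real.sinh t - ν * t)

lemma integrableOn_exp_neg_mul_sinh (ν : ℝ) {x : ℝ} (hx : 0 < x) :
    IntegrableOn (fun t => Real.exp (-x * Real.sinh t - ν * t)) (Ioi 0) := by
  refine ((integrable_descentMajorant hx |ν|).const_mul (Real.exp x)).integrableOn.mono'
    (Continuous.aestronglyMeasurable (by fun_prop))
    ((ae_restrict_iff' measurableSet_Ioi).2 (ae_of_all _ fun t ht => ?_))
  have ht₀ : 0 < t := ht
  have rate_le : descentRate t ≤ Real.sinh t + 1 := by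
    have hexp : Real.exp (-t) ≤ 1 := Real.exp_le_one_iff.2 (by linarith)
    unfold descentRate
    linarith [Real.cosh_sub_sinh t, one_div_cosh_pos t]
  have hmul := mul_le_mul_of_nonneg_left rate_le hx.le
  rw [Real.norm_of_nonneg (Real.exp_pos _).le, descentMajorant, ← Real.exp_add, Real.exp_le_exp,
    ← abs_mul]
  linarith [neg_abs_le (ν * t)]

lemma sommerfeldIntegrand_mul_I (ν x b : ℝ) :
    sommerfeldIntegrand ν x (b * I) = Complex.exp ((x * Real.cos b - ν * b : ℝ) * I) := by
  rw [sommerfeldIntegrand, Complex.cosh_mul_I, ← ofReal_cos]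
  push_cast
  ring_nf

lemma sommerfeldIntegrand_add_pi_div_two_mul_I (ν x s : ℝ) :
    sommerfeldIntegrand ν x (s + (π / 2 : ℝ) * I) =
      Complex.exp (-(ν * π / 2 : ℝ) * I) * (Real.exp (-x * Real.sinh s - ν * s) : ℝ) := by
  rw [sommerfeldIntegrand, ofReal_exp, ← Complex.exp_add, Complex.cosh_add, Complex.cosh_mul_I,
    Complex.sinh_mul_I, ← ofReal_cos, ← ofReal_sin, Real.cos_pi_div_two, Real.sin_pi_div_two]
  congr 1
  push_cast
  linear_combination (x * Complex.sinh s : ℂ) * I_sq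

lemma norm_sommerfeldIntegrand (ν x a b : ℝ) : ‖sommerfeldIntegrand ν x (a + b * I)‖ =
    Real.exp (-x * (Real.sinh a * Real.sin b) - ν * a) := by
  rw [sommerfeldIntegrand, Complex.norm_exp, Complex.cosh_add, Complex.cosh_mul_I,
    Complex.sinh_mul_I, ← ofReal_cosh, ← ofReal_sinh, ← ofReal_cos, ← ofReal_sin]
  simp only [sub_re, mul_re, add_re, add_im, mul_im, ofReal_re, ofReal_im, I_re, I_im]
  ring_nf

lemma sinh_mul_sin_gudermannian (s : ℝ) :
    Real.sinh s * Real.sin (gudermannian s) = descentRate s := by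
  rw [sin_gudermannian, descentRate]
  field_simp [(Real.cosh_pos s).ne']
  linarith [Real.cosh_sq' s]

lemma norm_sommerfeldIntegrand_le_of_gudermannian_le (ν : ℝ) {x R b : ℝ} (hx : 0 ≤ x) (hR : 0 ≤ R)
    (hb : gudermannian R ≤ b) (hb' : b ≤ π / 2) :
    ‖sommerfeldIntegrand ν x (R + b * I)‖ ≤ descentMajorant x |ν| R := by
  have hsin : Real.sin (gudermannian R) ≤ Real.sin b :=
    Real.sin_le_sin_of_le_of_le_pi_div_two (neg_lt_of_abs_lt (abs_gudermannian_lt R)).le hb' hb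
  have hrate : x * descentRate R ≤ x * (Real.sinh R * Real.sin b) := by
    rw [← sinh_mul_sin_gudermannian]
    have := Real.sinh_nonneg_iff.2 hR
    gcongr
  rw [norm_sommerfeldIntegrand, descentMajorant, Real.exp_le_exp, ← abs_mul]
  linarith [neg_abs_le (ν * R)]

lemma tendsto_integral_sommerfeldIntegrand_vertical (ν : ℝ) {x : ℝ} (hx : 0 < x) :
    Tendsto (fun R : ℝ => ∫ b in gudermannian R..π / 2, sommerfeldIntegrand ν x (R + b * I) * I)
      atTop (𝓝 0) := by
  have hlim : Tendsto (fun R : ℝ => descentMajorant x |ν| R * π) atTop (𝓝 0) := by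
    simpa using (tendsto_descentMajorant hx |ν| tendsto_abs_atTop_atTop).mul_const π
  refine squeeze_zero_norm' ?_ hlim
  filter_upwards [eventually_ge_atTop 0] with R hR
  obtain ⟨hlow, hhigh⟩ := abs_lt.1 (abs_gudermannian_lt R)
  refine (intervalIntegral.norm_integral_le_of_norm_le_const fun b hb => ?_).trans
    (mul_le_mul_of_nonneg_left (abs_le.2 ⟨?_, ?_⟩) (Real.exp_pos _).le)
  · rw [uIoc_of_le hhigh.le] at hb
    rw [norm_mul, norm_I, mul_one]
    exact norm_sommerfeldIntegrand_le_of_gudermannian_le ν hx.le hR hb.1.le hb.2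
  all_goals linarith

lemma hasDerivAt_horizontal (b s : ℝ) : HasDerivAt (fun s : ℝ => (s : ℂ) + b * I) 1 s :=
  (hasDerivAt_id s).ofReal_comp.add_const _

lemma hasDerivAt_vertical (a s : ℝ) : HasDerivAt (fun s : ℝ => (a : ℂ) + s * I) I s :=
  (((hasDerivAt_id s).ofReal_comp.mul_const I).const_add (a : ℂ)).congr_deriv (by simp)

lemma integral_descentKernel_interval (ν x R : ℝ) :
    ∫ s in (0 : ℝ)..R, descentKernel ν x s =
      (∫ b in (0 : ℝ)..π / 2, sommerfeldIntegrand ν x (b * I) * I) +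
      (∫ s in (0 : ℝ)..R, sommerfeldIntegrand ν x (s + (π / 2 : ℝ) * I)) -
      ∫ b in gudermannian R..π / 2, sommerfeldIntegrand ν x (R + b * I) * I := by
  have hdiff : Differentiable ℂ (sommerfeldIntegrand ν x) := fun z =>
    (hasDerivAt_sommerfeldIntegrand ν x z).differentiableAt
  obtain ⟨F, hF⟩ := hdiff.isExactOn_univ
  have path {γ γ' : ℝ → ℂ} (hγ : ∀ s, HasDerivAt γ (γ' s) s) (hγ' : Continuous γ') (a b : ℝ) :=
    integral_comp_mul_deriv_of_primitive (fun z => hF z (mem_univ z)) hdiff.continuous hγ hγ' a b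
  have descent := path hasDerivAt_descentPath continuous_descentVelocity 0 R
  have left := path (hasDerivAt_vertical 0) continuous_const 0 (π / 2)
  have top := path (hasDerivAt_horizontal (π / 2)) continuous_const 0 R
  have right := path (hasDerivAt_vertical R) continuous_const (gudermannian R) (π / 2)
  simp only [ofReal_zero, zero_add, zero_mul, mul_one] at left top
  rw [descentPath_zero] at descent
  simp only [descentKernel]
  rw [descent, left, top, right, descentPath]
  ring

lemma integral_Ioi_descentKernel (ν : ℝ) {x : ℝ} (hx : 0 < x) :
    ∫ s in Ioi (0 : ℝ), descentKernel ν x s =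
      I * (∫ b in (0 : ℝ)..π / 2, sommerfeldIntegrand ν x (b * I)) +
        Complex.exp (-(ν * π / 2 : ℝ) * I) * besselTail ν x := by
  have hdescent := intervalIntegral_tendsto_integral_Ioi 0
    (integrable_descentKernel ν hx).integrableOn tendsto_id
  have hint : IntegrableOn (fun s : ℝ => Complex.exp (-(ν * π / 2 : ℝ) * I) *
      (Real.exp (-x * Real.sinh s - ν * s) : ℝ)) (Ioi 0) :=
    (integrableOn_exp_neg_mul_sinh ν hx).ofReal.const_mul _
  have htop := intervalIntegral_tendsto_integral_Ioi 0 hint tendsto_id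
  rw [integral_const_mul, integral_complex_ofReal, ← besselTail] at htop
  have hlim := (htop.const_add (∫ b in (0 : ℝ)..π / 2, sommerfeldIntegrand ν x (b * I) * I)).sub
    (tendsto_integral_sommerfeldIntegrand_vertical ν hx)
  have hleft : ∫ b in (0 : ℝ)..π / 2, sommerfeldIntegrand ν x (b * I) * I =
      I * ∫ b in (0 : ℝ)..π / 2, sommerfeldIntegrand ν x (b * I) := by
    rw [intervalIntegral.integral_mul_const, mul_comm]
  rw [sub_zero, hleft] at hlim
  refine tendsto_nhds_unique hdescent (hlim.congr fun R => ?_)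
  simp only [id, integral_descentKernel_interval, sommerfeldIntegrand_add_pi_div_two_mul_I, hleft]

lemma integral_sommerfeldIntegrand_mul_I_symm (ν x : ℝ) :
    (∫ b in (0 : ℝ)..π / 2, sommerfeldIntegrand ν x (b * I)) +
      (∫ b in (0 : ℝ)..π / 2, sommerfeldIntegrand (-ν) x (b * I)) =
    Complex.exp ((ν * π / 2 : ℝ) * I) *
      ∫ θ in (0 : ℝ)..π, Complex.exp ((x * Real.sin θ - ν * θ : ℝ) * I) := by
  have hcont : Continuous fun b : ℝ => sommerfeldIntegrand ν x (b * I) :=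
    (continuous_sommerfeldIntegrand ν x).comp (by fun_prop)
  have reflect : ∫ b in (0 : ℝ)..π / 2, sommerfeldIntegrand (-ν) x (b * I) =
      ∫ b in -(π / 2)..0, sommerfeldIntegrand ν x (b * I) := by
    rw [← neg_zero, ← intervalIntegral.integral_comp_neg, neg_zero]
    simp [sommerfeldIntegrand]
  have shift (θ : ℝ) : sommerfeldIntegrand ν x ((θ - π / 2 : ℝ) * I) =
      Complex.exp ((ν * π / 2 : ℝ) * I) * Complex.exp ((x * Real.sin θ - ν * θ : ℝ) * I) := by
    rw [sommerfeldIntegrand_mul_I, Real.cos_sub_pi_div_two, ← Complex.exp_add]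
    push_cast
    ring_nf
  rw [reflect, add_comm, intervalIntegral.integral_add_adjacent_intervals
    (hcont.intervalIntegrable _ _) (hcont.intervalIntegrable _ _),
    ← intervalIntegral.integral_const_mul]
  simp only [← shift]
  rw [intervalIntegral.integral_comp_sub_right (fun b : ℝ => sommerfeldIntegrand ν x (b * I)),
    zero_sub, sub_half]

lemma descentIntegral_eq_integral_Ioi (ν : ℝ) {x : ℝ} (hx : 0 < x) :
    descentIntegral ν x = (∫ s in Ioi (0 : ℝ), descentKernel ν x s) +
      ∫ s in Ioi (0 : ℝ), descentKernel (-ν) x s := by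
  have reflect : ∫ s in Iic (0 : ℝ), descentKernel ν x s =
      ∫ s in Ioi (0 : ℝ), descentKernel (-ν) x s := by
    rw [← neg_zero, ← integral_comp_neg_Ioi, neg_zero]
    simp only [descentKernel_neg]
  have h := integrable_descentKernel ν hx
  rw [descentIntegral, ← intervalIntegral.integral_Iic_add_Ioi h.integrableOn h.integrableOn,
    reflect, add_comm]

lemma hankelH_eq (ν : ℝ) {x : ℝ} (hx : 0 < x) : hankelH ν x =
    1 / π * ((∫ θ in (0 : ℝ)..π, Complex.exp ((x * Real.sin θ - ν * θ : ℝ) * I)) -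
      I * (Complex.exp (-(ν * π : ℝ) * I) * besselTail ν x + besselTail (-ν) x)) := by
  have hprefactor : Complex.exp (-((ν + 1) * π / 2 : ℝ) * I) =
      Complex.exp (-(ν * π / 2 : ℝ) * I) * (-I) := by
    rw [← exp_neg_pi_div_two_mul_I, ← Complex.exp_add]
    push_cast
    ring_nf
  have hcancel : Complex.exp (-(ν * π / 2 : ℝ) * I) * Complex.exp ((ν * π / 2 : ℝ) * I) = 1 := by
    rw [← Complex.exp_add, neg_mul, neg_add_cancel, Complex.exp_zero]
  have hsquare : Complex.exp (-(ν * π / 2 : ℝ) * I) ^ 2 = Complex.exp (-(ν * π : ℝ) * I) := by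
    rw [← Complex.exp_nat_mul]
    push_cast
    ring_nf
  have hneg : -((-ν * π / 2 : ℝ) : ℂ) * I = (ν * π / 2 : ℝ) * I := by push_cast; ring
  have hdescent : descentIntegral ν x = Complex.exp (-(ν * π / 2 : ℝ) * I) * besselTail ν x +
      Complex.exp ((ν * π / 2 : ℝ) * I) * (besselTail (-ν) x +
        I * ∫ θ in (0 : ℝ)..π, Complex.exp ((x * Real.sin θ - ν * θ : ℝ) * I)) := by
    rw [descentIntegral_eq_integral_Ioi ν hx, integral_Ioi_descentKernel ν hx,
      integral_Ioi_descentKernel (-ν) hx, hneg]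
    linear_combination I * integral_sommerfeldIntegrand_mul_I_symm ν x
  rw [hankelH, hprefactor, hdescent]
  linear_combination (-I / π * besselTail ν x) * hsquare -
    (I / π * (besselTail (-ν) x +
      I * ∫ θ in (0 : ℝ)..π, Complex.exp ((x * Real.sin θ - ν * θ : ℝ) * I))) * hcancel -
    (1 / π * ∫ θ in (0 : ℝ)..π, Complex.exp ((x * Real.sin θ - ν * θ : ℝ) * I)) * I_sq

lemma besselJ_eq_re_hankelH (ν : ℝ) {x : ℝ} (hx : 0 < x) : besselJ ν x = (hankelH ν x).re := by
  have hre : (∫ θ in (0 : ℝ)..π, Complex.exp ((x * Real.sin θ - ν * θ : ℝ) * I)).re =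
      ∫ θ in (0 : ℝ)..π, Real.cos (x * Real.sin θ - ν * θ) := by
    have hint : IntervalIntegrable
        (fun θ : ℝ => Complex.exp ((x * Real.sin θ - ν * θ : ℝ) * I)) volume 0 π :=
      Continuous.intervalIntegrable (by fun_prop) _ _
    simpa only [reCLM_apply, exp_ofReal_mul_I_re] using (reCLM.intervalIntegral_comp_comm hint).symm
  have hexp : Complex.exp (-(ν * π : ℝ) * I) =
      (Real.cos (ν * π) : ℂ) - (Real.sin (ν * π) : ℂ) * I := by
    rw [← ofReal_neg, Complex.exp_mul_I, ← ofReal_cos, ← ofReal_sin, Real.cos_neg, Real.sin_neg]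
    push_cast
    ring
  rw [hankelH_eq ν hx, hexp, ← ofReal_one, ← ofReal_div, re_ofReal_mul, sub_re, hre, besselJ,
    ← besselTail]
  simp only [mul_re, mul_im, add_im, sub_re, sub_im, ofReal_re, ofReal_im, I_re, I_im]
  ring

end Contour

/-! ### Asymptotics of the Hankel function -/

section Asymptotics

/-- The weight `cosh (ν z) dz/ds` on the steepest descent path: what remains of the integrand
after removing `exp (-x * descentRate)` and averaging over `s ↦ -s`. -/
noncomputable def amplitudeWeight (ν s : ℝ) : ℂ :=
  Complex.cosh (ν * descentPath s) * descentVelocity s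

/-- The slowly varying amplitude `exp (-i x) * descentIntegral ν x`. -/
noncomputable def amplitude (ν x : ℝ) : ℂ :=
  ∫ s, (Real.exp (-x * descentRate s) : ℝ) * amplitudeWeight ν s

/-- The total mass of `exp (-x * descentRate)`, the leading order of the amplitude. -/
noncomputable def descentMass (x : ℝ) : ℝ := ∫ s, Real.exp (-x * descentRate s)

lemma exp_mul_amplitudeWeight (ν x s : ℝ) :
    Complex.exp (x * I) * ((Real.exp (-x * descentRate s) : ℝ) * amplitudeWeight ν s) =
      (1 / 2 : ℂ) * (descentKernel ν x s + descentKernel (-ν) x s) := by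
  rw [amplitudeWeight, descentKernel, descentKernel, sommerfeldIntegrand_descentPath,
    sommerfeldIntegrand_descentPath, Complex.cosh]
  push_cast
  simp only [neg_mul, neg_neg]
  ring

lemma integrable_amplitude (ν : ℝ) {x : ℝ} (hx : 0 < x) :
    Integrable fun s => ((Real.exp (-x * descentRate s) : ℝ) : ℂ) * amplitudeWeight ν s := by
  have h := ((integrable_descentKernel ν hx).add (integrable_descentKernel (-ν) hx)).const_mul
    (Complex.exp (-(x * I)) * (1 / 2))
  refine h.congr (ae_of_all _ fun s => ?_)
  simp only [Pi.add_apply]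
  rw [mul_assoc, ← exp_mul_amplitudeWeight, ← mul_assoc, ← Complex.exp_add,
    neg_add_cancel, Complex.exp_zero, one_mul]

lemma descentIntegral_eq_exp_mul_amplitude (ν : ℝ) {x : ℝ} (hx : 0 < x) :
    descentIntegral ν x = Complex.exp (x * I) * amplitude ν x := by
  have reflect : ∫ s, descentKernel (-ν) x s = ∫ s, descentKernel ν x s := by
    rw [← integral_neg_eq_self (descentKernel ν x)]
    simp only [descentKernel_neg]
  rw [amplitude, ← integral_const_mul]
  simp only [exp_mul_amplitudeWeight]
  rw [integral_const_mul, integral_add (integrable_descentKernel ν hx)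
    (integrable_descentKernel (-ν) hx), reflect, descentIntegral]
  ring

lemma hankelH_eq_exp_mul_amplitude (ν : ℝ) {x : ℝ} (hx : 0 < x) : hankelH ν x =
    (1 / π : ℝ) * Complex.exp ((x - ν * π / 2 - π / 2 : ℝ) * I) * amplitude ν x := by
  have hexp : Complex.exp ((x - ν * π / 2 - π / 2 : ℝ) * I) =
      Complex.exp (-((ν + 1) * π / 2 : ℝ) * I) * Complex.exp (x * I) := by
    rw [← Complex.exp_add]
    push_cast
    ring_nf
  rw [hankelH, descentIntegral_eq_exp_mul_amplitude ν hx, hexp]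
  push_cast
  ring

lemma im_amplitudeWeight (ν s : ℝ) : (amplitudeWeight ν s).im =
    Real.sinh (ν * s) * Real.sin (ν * gudermannian s) +
      Real.cosh (ν * s) * Real.cos (ν * gudermannian s) * (1 / Real.cosh s) := by
  have hpath : (ν : ℂ) * descentPath s = (ν * s : ℝ) + (ν * gudermannian s : ℝ) * I := by
    rw [descentPath]; push_cast; ring
  rw [amplitudeWeight, hpath, Complex.cosh_add, Complex.cosh_mul_I, Complex.sinh_mul_I,
    ← ofReal_cosh, ← ofReal_sinh, ← ofReal_cos, ← ofReal_sin, descentVelocity]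
  simp only [add_re, add_im, mul_re, mul_im, ofReal_re, ofReal_im, I_re, I_im, one_re, one_im]
  ring

lemma im_amplitudeWeight_pos {ν : ℝ} (hν : |ν| ≤ 1) (s : ℝ) : 0 < (amplitudeWeight ν s).im := by
  have hangle : |ν * gudermannian s| < π / 2 := by
    rw [abs_mul]
    exact (mul_le_of_le_one_left (abs_nonneg _) hν).trans_lt (abs_gudermannian_lt s)
  have hcos : 0 < Real.cos (ν * gudermannian s) := Real.cos_pos_of_mem_Ioo (abs_lt.1 hangle)
  have hsin : 0 ≤ Real.sinh (ν * s) * Real.sin (ν * gudermannian s) := by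
    refine sinh_mul_sin_nonneg ?_ (by linarith [pi_pos])
    rw [mul_mul_mul_comm]
    exact mul_nonneg (mul_self_nonneg ν) (mul_gudermannian_nonneg s)
  rw [im_amplitudeWeight]
  have := mul_pos (mul_pos (Real.cosh_pos (ν * s)) hcos) (one_div_cosh_pos s)
  linarith

lemma im_amplitude_pos {ν : ℝ} (hν : |ν| ≤ 1) {x : ℝ} (hx : 0 < x) : 0 < (amplitude ν x).im := by
  have hint := integrable_amplitude ν hx
  have hpos (s : ℝ) :
      0 < (((Real.exp (-x * descentRate s) : ℝ) : ℂ) * amplitudeWeight ν s).im := by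
    rw [im_ofReal_mul]
    exact mul_pos (Real.exp_pos _) (im_amplitudeWeight_pos hν s)
  have him : (amplitude ν x).im =
      ∫ s, (((Real.exp (-x * descentRate s) : ℝ) : ℂ) * amplitudeWeight ν s).im :=
    (imCLM.integral_comp_comm hint).symm
  rw [him, integral_pos_iff_support_of_nonneg (fun s => (hpos s).le) hint.im,
    Function.support_eq_univ fun s => (hpos s).ne']
  simp

lemma integrable_exp_neg_mul_descentRate {x : ℝ} (hx : 0 < x) :
    Integrable fun s => Real.exp (-x * descentRate s) :=
  (integrable_descentMajorant hx 0).congr (ae_of_all _ fun s => by simp [descentMajorant])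

lemma one_sub_sq_div_two_le_one_div_cosh (s : ℝ) : 1 - s ^ 2 / 2 ≤ 1 / Real.cosh s := by
  calc 1 - s ^ 2 / 2 ≤ Real.exp (-(s ^ 2 / 2)) := Real.one_sub_le_exp_neg _
    _ = 1 / Real.exp (s ^ 2 / 2) := by rw [Real.exp_neg, one_div]
    _ ≤ 1 / Real.cosh s := one_div_le_one_div_of_le (Real.cosh_pos s) (Real.cosh_le_exp_half_sq s)

lemma descentRate_le {s : ℝ} (hs : s ^ 2 ≤ 1) : descentRate s ≤ 2 * s ^ 2 := by
  have hsq : |s ^ 2 / 2| = s ^ 2 / 2 := abs_of_nonneg (by positivity)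
  have hexp := Real.abs_exp_sub_one_le (x := s ^ 2 / 2) (by rw [hsq]; linarith)
  rw [hsq] at hexp
  unfold descentRate
  linarith [le_of_abs_le hexp, Real.cosh_le_exp_half_sq s, one_sub_sq_div_two_le_one_div_cosh s,
    sq_nonneg s]

lemma exp_neg_two_div_sqrt_le_descentMass {x : ℝ} (hx : 1 ≤ x) :
    Real.exp (-2) / √x ≤ descentMass x := by
  have hx₀ : 0 < x := by linarith
  have hint := integrable_exp_neg_mul_descentRate hx₀
  have lower {s : ℝ} (hs : s ∈ Icc 0 (1 / √x)) :
      Real.exp (-2) ≤ Real.exp (-x * descentRate s) := by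
    have hs_sq : s ^ 2 ≤ 1 / x := by
      have h := pow_le_pow_left₀ hs.1 hs.2 2
      rwa [div_pow, one_pow, Real.sq_sqrt hx₀.le] at h
    have hrate := descentRate_le (hs_sq.trans ((div_le_one hx₀).2 hx))
    have hx_sq : x * s ^ 2 ≤ 1 := by rwa [le_div_iff₀' hx₀] at hs_sq
    have := mul_le_mul_of_nonneg_left hrate hx₀.le
    exact Real.exp_le_exp.2 (by linarith)
  calc Real.exp (-2) / √x = ∫ _ in Icc 0 (1 / √x), Real.exp (-2) := by
        rw [setIntegral_const, Real.volume_real_Icc_of_le (by positivity), smul_eq_mul]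
        ring
    _ ≤ ∫ s in Icc 0 (1 / √x), Real.exp (-x * descentRate s) :=
        setIntegral_mono_on (by simp) hint.integrableOn measurableSet_Icc fun s hs => lower hs
    _ ≤ descentMass x := setIntegral_le_integral hint (ae_of_all _ fun s => (Real.exp_pos _).le)

lemma descentMass_pos {x : ℝ} (hx : 1 ≤ x) : 0 < descentMass x :=
  lt_of_lt_of_le (by have := Real.sqrt_pos.2 (one_pos.trans_le hx); positivity)
    (exp_neg_two_div_sqrt_le_descentMass hx)

lemma norm_amplitudeWeight_sub_le {V ν : ℝ} (hν : |ν| ≤ V) (s : ℝ) :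
    ‖amplitudeWeight ν s - (1 + I)‖ ≤ (8 * V ^ 2 + 1) * (s ^ 2 * Real.exp (2 * V * |s|)) := by
  have hV : 0 ≤ V := (abs_nonneg ν).trans hν
  have split : amplitudeWeight ν s - (1 + I) =
      (Complex.cosh (ν * descentPath s) - 1) * descentVelocity s +
        (1 / Real.cosh s - 1 : ℝ) * I := by
    rw [amplitudeWeight, descentVelocity]; push_cast; ring
  have hpath : ‖(ν : ℂ) * descentPath s‖ ≤ 2 * V * |s| := by
    rw [norm_mul, norm_real, Real.norm_eq_abs, mul_comm 2, mul_assoc]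
    gcongr
    exact norm_descentPath_le s
  have hcosh : ‖Complex.cosh (ν * descentPath s) - 1‖ ≤
      (2 * V * |s|) ^ 2 * Real.exp (2 * V * |s|) :=
    (norm_cosh_sub_one_le _).trans (by gcongr)
  have hvelocity : |1 / Real.cosh s - 1| ≤ s ^ 2 * Real.exp (2 * V * |s|) := by
    have hexp : 1 ≤ Real.exp (2 * V * |s|) := Real.one_le_exp (by positivity)
    have hsq : s ^ 2 ≤ s ^ 2 * Real.exp (2 * V * |s|) := le_mul_of_one_le_right (sq_nonneg s) hexp
    have := one_sub_sq_div_two_le_one_div_cosh s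
    rw [abs_le]
    constructor <;> linarith [one_div_cosh_le_one s, sq_nonneg s]
  calc ‖amplitudeWeight ν s - (1 + I)‖
      ≤ ‖Complex.cosh (ν * descentPath s) - 1‖ * ‖descentVelocity s‖ + |1 / Real.cosh s - 1| := by
        rw [split]
        refine (norm_add_le _ _).trans_eq ?_
        rw [norm_mul, norm_mul, norm_I, norm_real, Real.norm_eq_abs, mul_one]
    _ ≤ (2 * V * |s|) ^ 2 * Real.exp (2 * V * |s|) * 2 + s ^ 2 * Real.exp (2 * V * |s|) := by
        gcongr
        exact norm_descentVelocity_le s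
    _ = (8 * V ^ 2 + 1) * (s ^ 2 * Real.exp (2 * V * |s|)) := by
        rw [mul_pow, sq_abs]; ring

lemma sq_mul_descentMajorant_le {x : ℝ} (hx : 1 ≤ x) (c s : ℝ) :
    s ^ 2 * descentMajorant x c s ≤ 8 * Real.exp (c ^ 2) / x * Real.exp (-(x / 8) * s ^ 2) := by
  have hx₀ : 0 < x := by linarith
  have hsq : s ^ 2 ≤ 8 / x * Real.exp (x / 8 * s ^ 2) := by
    have h : x / 8 * s ^ 2 ≤ Real.exp (x / 8 * s ^ 2) := by
      linarith [Real.add_one_le_exp (x / 8 * s ^ 2)]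
    calc s ^ 2 = 8 / x * (x / 8 * s ^ 2) := by field_simp
      _ ≤ 8 / x * Real.exp (x / 8 * s ^ 2) := by gcongr
  have hmajorant : descentMajorant x c s ≤ Real.exp (c ^ 2) * Real.exp (-(x / 4) * s ^ 2) := by
    refine (descentMajorant_le_gaussian hx₀ c s).trans ?_
    gcongr
    exact div_le_self (sq_nonneg c) hx
  calc s ^ 2 * descentMajorant x c s
      ≤ 8 / x * Real.exp (x / 8 * s ^ 2) * (Real.exp (c ^ 2) * Real.exp (-(x / 4) * s ^ 2)) :=
        mul_le_mul hsq hmajorant (Real.exp_pos _).le (by positivity)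
    _ = 8 * Real.exp (c ^ 2) / x * (Real.exp (x / 8 * s ^ 2) * Real.exp (-(x / 4) * s ^ 2)) := by
        ring
    _ = 8 * Real.exp (c ^ 2) / x * Real.exp (-(x / 8) * s ^ 2) := by
        rw [← Real.exp_add]; ring_nf

lemma norm_amplitude_sub_le {V ν x : ℝ} (hν : |ν| ≤ V) (hx : 1 ≤ x) :
    ‖amplitude ν x - (1 + I) * descentMass x‖ ≤
      (8 * V ^ 2 + 1) * (8 * Real.exp ((2 * V) ^ 2) / x) * √(π / (x / 8)) := by
  have hx₀ : 0 < x := by linarith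
  have hmass : Integrable fun s => ((Real.exp (-x * descentRate s) : ℝ) : ℂ) :=
    (integrable_exp_neg_mul_descentRate hx₀).ofReal
  have hdiff : amplitude ν x - (1 + I) * descentMass x =
      ∫ s, (Real.exp (-x * descentRate s) : ℝ) * (amplitudeWeight ν s - (1 + I)) := by
    simp only [mul_sub, mul_comm _ (1 + I)]
    rw [integral_sub (by simpa only [mul_comm] using integrable_amplitude ν hx₀)
      (hmass.const_mul _), integral_const_mul, integral_complex_ofReal, ← descentMass, amplitude]
  rw [hdiff, ← integral_gaussian, ← integral_const_mul]
  refine norm_integral_le_of_norm_le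
    ((integrable_exp_neg_mul_sq (by positivity)).const_mul _) (ae_of_all _ fun s => ?_)
  rw [norm_mul, norm_real, Real.norm_of_nonneg (Real.exp_pos _).le]
  calc Real.exp (-x * descentRate s) * ‖amplitudeWeight ν s - (1 + I)‖
      ≤ Real.exp (-x * descentRate s) *
          ((8 * V ^ 2 + 1) * (s ^ 2 * Real.exp (2 * V * |s|))) := by
        gcongr
        exact norm_amplitudeWeight_sub_le hν s
    _ = (8 * V ^ 2 + 1) * (s ^ 2 * descentMajorant x (2 * V) s) := by
        rw [descentMajorant, Real.exp_add]; ring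
    _ ≤ (8 * V ^ 2 + 1) * (8 * Real.exp ((2 * V) ^ 2) / x * Real.exp (-(x / 8) * s ^ 2)) :=
        mul_le_mul_of_nonneg_left (sq_mul_descentMajorant_le hx (2 * V) s) (by positivity)
    _ = _ := (mul_assoc _ _ _).symm

lemma exists_norm_amplitude_sub_le (V : ℝ) : ∃ C > 0, ∀ ν x : ℝ, |ν| ≤ V → 1 ≤ x →
    ‖amplitude ν x - (1 + I) * descentMass x‖ ≤ C / x * descentMass x := by
  set A : ℝ := (8 * V ^ 2 + 1) * (8 * Real.exp ((2 * V) ^ 2))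
  refine ⟨A * √(8 * π) * Real.exp 2, by positivity, fun ν x hν hx => ?_⟩
  have : 0 < x := by linarith
  have hsqrt : √(π / (x / 8)) = √(8 * π) * (1 / √x) := by
    rw [mul_one_div, ← Real.sqrt_div (by positivity)]
    congr 1
    field_simp
  have hmass : 1 / √x ≤ Real.exp 2 * descentMass x := by
    have h := mul_le_mul_of_nonneg_left (exp_neg_two_div_sqrt_le_descentMass hx)
      (Real.exp_pos 2).le
    rwa [← mul_div_assoc, ← Real.exp_add, add_neg_cancel, Real.exp_zero] at h
  calc ‖amplitude ν x - (1 + I) * descentMass x‖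
      ≤ A / x * √(8 * π) * (1 / √x) := by
        refine (norm_amplitude_sub_le hν hx).trans_eq ?_
        rw [hsqrt]
        ring
    _ ≤ A / x * √(8 * π) * (Real.exp 2 * descentMass x) := by gcongr
    _ = A * √(8 * π) * Real.exp 2 / x * descentMass x := by ring

/-- The leading phase `x - νπ/2 - π/4` of the Hankel function. -/
noncomputable def leadingPhase (ν x : ℝ) : ℝ := x - ν * π / 2 - π / 4

lemma exp_leadingPhase_mul_I (ν x : ℝ) : √2 * Complex.exp (leadingPhase ν x * I) =
    Complex.exp ((x - ν * π / 2 - π / 2 : ℝ) * I) * (1 + I) := by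
  have hsqrt : (√2 : ℂ) ^ 2 = 2 := by rw [← ofReal_pow, Real.sq_sqrt zero_le_two, ofReal_ofNat]
  have hone : (1 + I : ℂ) = √2 * Complex.exp ((π / 4 : ℝ) * I) := by
    rw [Complex.exp_mul_I, ← ofReal_cos, ← ofReal_sin, Real.cos_pi_div_four, Real.sin_pi_div_four]
    push_cast
    linear_combination (-(1 + I) / 2) * hsqrt
  rw [hone, mul_left_comm, ← Complex.exp_add, leadingPhase]
  push_cast
  ring_nf

lemma exists_hankelH_eq_of_le (V : ℝ) : ∃ C > 0, ∀ ν x : ℝ, |ν| ≤ V → 1 ≤ x →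
    ∃ (r : ℝ) (ε : ℂ), 0 < r ∧ ‖ε‖ ≤ C / x ∧
      hankelH ν x = r * Complex.exp (leadingPhase ν x * I) * (1 + ε) := by
  obtain ⟨C, hC, hbound⟩ := exists_norm_amplitude_sub_le V
  refine ⟨C, hC, fun ν x hν hx => ?_⟩
  have hmass : 0 < descentMass x := descentMass_pos hx
  have hnorm : 1 ≤ ‖(1 + I : ℂ)‖ := by simpa using abs_re_le_norm (1 + I)
  have hdenom : ((1 + I) * descentMass x : ℂ) ≠ 0 :=
    mul_ne_zero (norm_pos_iff.1 (one_pos.trans_le hnorm)) (mod_cast hmass.ne')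
  refine ⟨√2 * descentMass x / π,
    (amplitude ν x - (1 + I) * descentMass x) / ((1 + I) * descentMass x), by positivity, ?_, ?_⟩
  · rw [norm_div, div_le_iff₀ (norm_pos_iff.2 hdenom), norm_mul, norm_real,
      Real.norm_of_nonneg hmass.le]
    refine (hbound ν x hν hx).trans ?_
    have : 0 < C / x := by positivity
    gcongr
    exact le_mul_of_one_le_left hmass.le hnorm
  · rw [one_add_div hdenom, add_sub_cancel,
      hankelH_eq_exp_mul_amplitude ν (one_pos.trans_le hx), mul_div_assoc', eq_div_iff hdenom]
    simp only [ofReal_div, ofReal_mul, ofReal_one]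
    linear_combination -(descentMass x / π * amplitude ν x : ℂ) * exp_leadingPhase_mul_I ν x

end Asymptotics

/-! ### The phase of the Hankel function -/

section Phase

open ComplexConjugate

lemma mul_exp_mul_conj_mul_exp (r s a b : ℝ) (u v : ℂ) :
    r * Complex.exp (a * I) * u * conj (s * Complex.exp (b * I) * v) =
      (r * s : ℝ) * (Complex.exp ((a - b : ℝ) * I) * (u * conj v)) := by
  have hexp : Complex.exp ((a - b : ℝ) * I) = Complex.exp (a * I) * Complex.exp (-(b * I)) := by
    rw [← Complex.exp_add]
    push_cast
    ring_nf
  rw [hexp, map_mul, map_mul, ← Complex.exp_conj, map_mul, conj_ofReal, conj_ofReal, conj_I,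
    mul_neg]
  push_cast
  ring

lemma norm_mul_exp_sub_mul_I {r a t : ℝ} {u z : ℂ} (hr : 0 < r)
    (hz : z = r * Complex.exp (a * I) * u) (ht : z = ‖z‖ * Complex.exp (t * I)) :
    ‖u‖ * Complex.exp ((t - a : ℝ) * I) = u := by
  have hnorm : ‖z‖ = r * ‖u‖ := by
    rw [hz, norm_mul, norm_mul, norm_exp_ofReal_mul_I, norm_real, Real.norm_of_nonneg hr.le,
      mul_one]
  have hexp : Complex.exp (t * I) = Complex.exp (a * I) * Complex.exp ((t - a : ℝ) * I) := by
    rw [← Complex.exp_add]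
    push_cast
    ring_nf
  have hne : (r * Complex.exp (a * I) : ℂ) ≠ 0 :=
    mul_ne_zero (mod_cast hr.ne') (Complex.exp_ne_zero _)
  rw [hnorm, hexp, hz] at ht
  refine mul_left_cancel₀ hne ?_
  rw [ht]
  push_cast
  ring

lemma cos_pos_and_abs_sin_le {ε : ℂ} {t : ℝ} (hε : ‖ε‖ ≤ 1 / 2)
    (ht : ‖1 + ε‖ * Complex.exp (t * I) = 1 + ε) : 0 < Real.cos t ∧ |Real.sin t| ≤ 2 * ‖ε‖ := by
  have hre : ‖1 + ε‖ * Real.cos t = 1 + ε.re := by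
    simpa only [re_ofReal_mul, exp_ofReal_mul_I_re, add_re, one_re] using congrArg re ht
  have him : ‖1 + ε‖ * Real.sin t = ε.im := by
    simpa only [im_ofReal_mul, exp_ofReal_mul_I_im, add_im, one_im, zero_add] using congrArg im ht
  have hre_ge : 1 / 2 ≤ 1 + ε.re := by linarith [(abs_le.1 (abs_re_le_norm ε)).1]
  have hnorm : 1 / 2 ≤ ‖1 + ε‖ := hre_ge.trans (by simpa using re_le_norm (1 + ε))
  constructor
  · exact pos_of_mul_pos_right (by linarith : 0 < ‖1 + ε‖ * Real.cos t) (norm_nonneg _)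
  · have h : 1 / 2 * |Real.sin t| ≤ ‖ε‖ := calc
      1 / 2 * |Real.sin t| ≤ ‖1 + ε‖ * |Real.sin t| := by gcongr
      _ = |ε.im| := by rw [← him, abs_mul, abs_norm]
      _ ≤ ‖ε‖ := abs_im_le_norm ε
    linarith

lemma re_one_add_mul_conj_pos {ε δ : ℂ} (hε : ‖ε‖ ≤ 1 / 4) (hδ : ‖δ‖ ≤ 1 / 4) :
    0 < ((1 + ε) * conj (1 + δ)).re := by
  have hεre := abs_le.1 ((abs_re_le_norm ε).trans hε)
  have hδre := abs_le.1 ((abs_re_le_norm δ).trans hδ)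
  have him : |ε.im * δ.im| ≤ 1 / 4 * (1 / 4) := by
    rw [abs_mul]
    gcongr
    exacts [(abs_im_le_norm ε).trans hε, (abs_im_le_norm δ).trans hδ]
  have hre : 3 / 4 * (3 / 4) ≤ (1 + ε.re) * (1 + δ.re) := by
    gcongr <;> linarith
  have hexpand : ((1 + ε) * conj (1 + δ)).re = (1 + ε.re) * (1 + δ.re) + ε.im * δ.im := by
    simp
  linarith [(abs_le.1 him).1]

/-- The cross product `J_{ν+1} Y_ν - J_ν Y_{ν+1}` of the Hankel functions `H = J + i Y` of
neighbouring orders. It plays the role of the Wronskian of `J_ν` and `Y_ν`. -/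
noncomputable def hankelCross (ν x : ℝ) : ℝ := (hankelH ν x * conj (hankelH (ν + 1) x)).im

lemma mul_hankelCross_eq (ν : ℝ) {x y : ℝ} (hx : 0 < x) (hy : 0 < y) :
    x * hankelCross ν x = y * hankelCross ν y := by
  refine eq_of_hasDerivAt_zero (f := fun x => x * hankelCross ν x) isOpen_Ioi isPreconnected_Ioi
    (fun z (hz : 0 < z) => ?_) hx hy
  have hH' := hasDerivAt_hankelH' (ν + 1) hz
  rw [add_sub_cancel_right] at hH'
  have hmul := (hasDerivAt_id z).ofReal_comp.mul ((hasDerivAt_hankelH ν hz).mul hH'.star)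
  have him := imCLM.hasFDerivAt.comp_hasDerivAt z hmul
  have hfun : (fun x => x * hankelCross ν x) = imCLM ∘
      ((fun y : ℝ => ((id y : ℝ) : ℂ)) * (hankelH ν * fun y => star (hankelH (ν + 1) y))) := by
    funext y
    simp [hankelCross]
  rw [hfun]
  refine him.congr_deriv ?_
  have hz' : (z : ℂ) ≠ 0 := mod_cast hz.ne'
  have hreal : ((1 : ℝ) : ℂ) * (hankelH ν z * conj (hankelH (ν + 1) z)) + z *
      (((ν / z : ℝ) * hankelH ν z - hankelH (ν + 1) z) * conj (hankelH (ν + 1) z) +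
        hankelH ν z * conj (hankelH ν z - ((ν + 1) / z : ℝ) * hankelH (ν + 1) z)) =
      (z * (normSq (hankelH ν z) - normSq (hankelH (ν + 1) z)) : ℝ) := by
    rw [map_sub, map_mul, conj_ofReal, ofReal_mul, ofReal_sub, ← mul_conj, ← mul_conj]
    push_cast
    field_simp
    ring
  exact (congrArg im hreal).trans (ofReal_im _)

lemma hankelCross_pos (ν : ℝ) {x : ℝ} (hx : 0 < x) : 0 < hankelCross ν x := by
  obtain ⟨C, -, hasymp⟩ := exists_hankelH_eq_of_le (|ν| + 1)
  set y : ℝ := max 1 (4 * C)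
  have hy : 1 ≤ y := le_max_left _ _
  have hy₀ : 0 < y := by linarith
  have hCy : C / y ≤ 1 / 4 := by
    rw [div_le_iff₀ hy₀]
    linarith [le_max_right 1 (4 * C)]
  obtain ⟨r, ε, hr, hε, hH⟩ := hasymp ν y (by linarith) hy
  obtain ⟨s, δ, hs, hδ, hH'⟩ := hasymp (ν + 1) y (by simpa using abs_add_le ν 1) hy
  have hphase : leadingPhase ν y - leadingPhase (ν + 1) y = π / 2 := by
    simp only [leadingPhase]
    ring
  have hcross : hankelCross ν y = r * s * ((1 + ε) * conj (1 + δ)).re := by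
    rw [hankelCross, hH, hH', mul_exp_mul_conj_mul_exp, hphase, ofReal_div, ofReal_ofNat,
      Complex.exp_pi_div_two_mul_I, im_ofReal_mul, I_mul_im]
  have hpos : 0 < y * hankelCross ν y := by
    have := re_one_add_mul_conj_pos (hε.trans hCy) (hδ.trans hCy)
    rw [hcross]
    positivity
  rw [← mul_hankelCross_eq ν hx hy₀] at hpos
  exact pos_of_mul_pos_right hpos hx.le

lemma hankelH_ne_zero (ν : ℝ) {x : ℝ} (hx : 0 < x) : hankelH ν x ≠ 0 := fun h =>
  (hankelCross_pos ν hx).ne' (by simp [hankelCross, h])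

lemma continuousOn_hankelH (ν : ℝ) : ContinuousOn (hankelH ν) (Ioi 0) := fun _ hx =>
  (hasDerivAt_hankelH ν hx).continuousAt.continuousWithinAt

lemma im_sub_hankelH_div_hankelH (ν x : ℝ) :
    ((ν / x : ℝ) - hankelH (ν + 1) x / hankelH ν x).im =
      hankelCross ν x / normSq (hankelH ν x) := by
  rw [sub_im, ofReal_im, div_im, hankelCross, mul_im, conj_re, conj_im]
  ring

lemma exists_continuous_arg_hankelH (ν : ℝ) : ∃ θ : ℝ → ℝ, ∀ x ∈ Ioi (0 : ℝ),
    HasDerivAt θ (hankelCross ν x / normSq (hankelH ν x)) x ∧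
      hankelH ν x = ‖hankelH ν x‖ * Complex.exp (θ x * I) := by
  have hlog (x : ℝ) (hx : x ∈ Ioi (0 : ℝ)) : HasDerivAt (hankelH ν)
      (((ν / x : ℝ) - hankelH (ν + 1) x / hankelH ν x) * hankelH ν x) x := by
    refine (hasDerivAt_hankelH ν hx).congr_deriv ?_
    rw [sub_mul, div_mul_cancel₀ _ (hankelH_ne_zero ν hx)]
  have hcont : ContinuousOn
      (fun x : ℝ => ((ν / x : ℝ) : ℂ) - hankelH (ν + 1) x / hankelH ν x) (Ioi 0) := by
    refine .sub ?_ ((continuousOn_hankelH _).div (continuousOn_hankelH _)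
      fun x hx => hankelH_ne_zero ν hx)
    exact continuous_ofReal.comp_continuousOn
      (continuousOn_const.div continuousOn_id fun x hx => (mem_Ioi.1 hx).ne')
  simpa only [im_sub_hankelH_div_hankelH] using
    exists_continuous_arg isOpen_Ioi ordConnected_Ioi hlog hcont

lemma exists_cos_pos_and_abs_sin_sub_leadingPhase_le (V : ℝ) : ∃ C X : ℝ, 0 < C ∧ 1 ≤ X ∧
    ∀ ν x t : ℝ, |ν| ≤ V → X ≤ x → hankelH ν x = ‖hankelH ν x‖ * Complex.exp (t * I) →
      0 < Real.cos (t - leadingPhase ν x) ∧ |Real.sin (t - leadingPhase ν x)| ≤ C / x := by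
  obtain ⟨C, hC, hasymp⟩ := exists_hankelH_eq_of_le V
  refine ⟨2 * C, max 1 (2 * C), by positivity, le_max_left _ _, fun ν x t hν hx hpolar => ?_⟩
  have hx₁ : 1 ≤ x := (le_max_left _ _).trans hx
  have hCx : C / x ≤ 1 / 2 := by
    rw [div_le_iff₀ (one_pos.trans_le hx₁)]
    linarith [(le_max_right 1 (2 * C)).trans hx]
  obtain ⟨r, ε, hr, hε, hH⟩ := hasymp ν x hν hx₁
  obtain ⟨hcos, hsin⟩ :=
    cos_pos_and_abs_sin_le (hε.trans hCx) (norm_mul_exp_sub_mul_I hr hH hpolar)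
  refine ⟨hcos, hsin.trans ?_⟩
  rw [mul_div_assoc]
  gcongr

lemma exists_arg_hankelH_sub_leadingPhase_le (V : ℝ) : ∃ C X : ℝ, 0 < C ∧ 1 ≤ X ∧
    ∀ (ν : ℝ) (θ : ℝ → ℝ), |ν| ≤ V → ContinuousOn θ (Ioi 0) →
      (∀ x, 0 < x → hankelH ν x = ‖hankelH ν x‖ * Complex.exp (θ x * I)) →
      (∃ x₀ ≥ X, |θ x₀ - leadingPhase ν x₀| ≤ π) →
      ∀ x ≥ X, |θ x - leadingPhase ν x| < π / 2 ∧ |θ x - leadingPhase ν x| ≤ C / x := by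
  obtain ⟨C, X, hC, hX, hbound⟩ := exists_cos_pos_and_abs_sin_sub_leadingPhase_le V
  refine ⟨π / 2 * C, X, by positivity, hX, ?_⟩
  rintro ν θ hν hcont hpolar ⟨x₀, hx₀, hclose⟩ x hx
  have hpos {y : ℝ} (hy : X ≤ y) : 0 < y := by linarith
  have hcont' : ContinuousOn (fun y => θ y - leadingPhase ν y) (Ici X) :=
    (hcont.mono fun y hy => hpos hy).sub (by unfold leadingPhase; fun_prop)
  have hcos (y : ℝ) (hy : X ≤ y) : 0 < Real.cos (θ y - leadingPhase ν y) :=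
    (hbound ν y _ hν hy (hpolar y (hpos hy))).1
  have hstart : |θ x₀ - leadingPhase ν x₀| < π / 2 :=
    abs_lt_pi_div_two_of_cos_pos (by linarith [pi_pos]) (hcos x₀ hx₀)
  have hstay : |θ x - leadingPhase ν x| < π / 2 :=
    abs_lt_pi_div_two_of_isPreconnected isPreconnected_Ici hcont' hcos hx₀ hstart hx
  refine ⟨hstay, (abs_le_pi_div_two_mul_abs_sin hstay.le).trans ?_⟩
  rw [mul_div_assoc]
  gcongr
  exact (hbound ν x _ hν hx (hpolar x (hpos hx))).2

/-- The phase of `H_ν`: its continuous argument on `(0, ∞)`, normalised at infinity by the leading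
phase. -/
structure IsHankelPhase (ν : ℝ) (θ : ℝ → ℝ) : Prop where
  hasDerivAt : ∀ x, 0 < x → HasDerivAt θ (hankelCross ν x / normSq (hankelH ν x)) x
  polar : ∀ x, 0 < x → hankelH ν x = ‖hankelH ν x‖ * Complex.exp (θ x * I)
  tendsto : Tendsto (fun x => θ x - leadingPhase ν x) atTop (𝓝 0)

lemma exists_int_abs_sub_mul_two_pi_le (y : ℝ) : ∃ n : ℤ, |y - n * (2 * π)| ≤ π := by
  refine ⟨round (y / (2 * π)), ?_⟩
  have hscale : y - round (y / (2 * π)) * (2 * π) =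
      (y / (2 * π) - round (y / (2 * π))) * (2 * π) := by
    field_simp
  rw [hscale, abs_mul, abs_of_pos two_pi_pos]
  calc |y / (2 * π) - round (y / (2 * π))| * (2 * π) ≤ 1 / 2 * (2 * π) := by
        gcongr
        exact abs_sub_round _
    _ = π := by ring

lemma exists_isHankelPhase (ν : ℝ) : ∃ θ, IsHankelPhase ν θ := by
  obtain ⟨θ, hθ⟩ := exists_continuous_arg_hankelH ν
  obtain ⟨C, X, -, -, hbound⟩ := exists_arg_hankelH_sub_leadingPhase_le |ν|
  obtain ⟨n, hn⟩ := exists_int_abs_sub_mul_two_pi_le (θ X - leadingPhase ν X)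
  have hderiv (x : ℝ) (hx : 0 < x) : HasDerivAt (fun x => θ x - n * (2 * π))
      (hankelCross ν x / normSq (hankelH ν x)) x := (hθ x hx).1.sub_const _
  have hpolar (x : ℝ) (hx : 0 < x) :
      hankelH ν x = ‖hankelH ν x‖ * Complex.exp ((θ x - n * (2 * π) : ℝ) * I) := by
    have hperiod : ((θ x - n * (2 * π) : ℝ) : ℂ) * I = θ x * I - n * (2 * π * I) := by
      push_cast
      ring
    rw [hperiod, Complex.exp_periodic.sub_int_mul_eq]
    exact (hθ x hx).2
  have hclose := hbound ν (fun x => θ x - n * (2 * π)) le_rfl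
    (fun x hx => (hderiv x hx).continuousAt.continuousWithinAt) hpolar
    ⟨X, le_rfl, by rwa [sub_right_comm]⟩
  have hlim : Tendsto (fun x : ℝ => C / x) atTop (𝓝 0) := tendsto_const_nhds.div_atTop tendsto_id
  refine ⟨_, hderiv, hpolar, squeeze_zero_norm' ?_ hlim⟩
  filter_upwards [eventually_ge_atTop X] with x hx using (hclose x hx).2

lemma mem_Ioo_zero_pi_of_tendsto {f : ℝ → ℝ} {a c : ℝ} (hf : ContinuousOn f (Ioi a))
    (hsin : ∀ x ∈ Ioi a, 0 < Real.sin (f x)) (hlim : Tendsto f atTop (𝓝 c)) (hc : c ∈ Ioo 0 π)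
    {x : ℝ} (hx : a < x) : f x ∈ Ioo 0 π := by
  obtain ⟨x₀, hx₀, h₀⟩ := ((eventually_gt_atTop a).and (hlim (isOpen_Ioo.mem_nhds hc))).exists
  exact mem_Ioo_zero_pi_of_isPreconnected isPreconnected_Ioi hf hsin hx₀ h₀ hx

namespace IsHankelPhase

variable {ν : ℝ} {θ : ℝ → ℝ}

lemma continuousOn (hθ : IsHankelPhase ν θ) : ContinuousOn θ (Ioi 0) := fun x hx =>
  (hθ.hasDerivAt x hx).continuousAt.continuousWithinAt

lemma strictMonoOn (hθ : IsHankelPhase ν θ) : StrictMonoOn θ (Ioi 0) := by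
  refine strictMonoOn_of_deriv_pos (convex_Ioi 0) hθ.continuousOn fun x hx => ?_
  rw [interior_Ioi] at hx
  rw [(hθ.hasDerivAt x hx).deriv]
  exact div_pos (hankelCross_pos ν hx) (normSq_pos.2 (hankelH_ne_zero ν hx))

lemma besselJ_eq (hθ : IsHankelPhase ν θ) {x : ℝ} (hx : 0 < x) :
    besselJ ν x = ‖hankelH ν x‖ * Real.cos (θ x) := by
  rw [besselJ_eq_re_hankelH ν hx, ← exp_ofReal_mul_I_re, ← re_ofReal_mul, ← hθ.polar x hx]

lemma besselJ_eq_zero_iff (hθ : IsHankelPhase ν θ) {x : ℝ} (hx : 0 < x) :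
    besselJ ν x = 0 ↔ Real.cos (θ x) = 0 := by
  rw [hθ.besselJ_eq hx, mul_eq_zero, norm_eq_zero, or_iff_right (hankelH_ne_zero ν hx)]

lemma cos_pos (hθ : IsHankelPhase ν θ) {x : ℝ} (hx : 0 < x) (hJ : 0 < besselJ ν x) :
    0 < Real.cos (θ x) := by
  rw [hθ.besselJ_eq hx] at hJ
  exact pos_of_mul_pos_right hJ (norm_nonneg _)

lemma sub_mem_Ioo_zero_pi {φ : ℝ → ℝ} (hθ : IsHankelPhase ν θ) (hφ : IsHankelPhase (ν + 1) φ)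
    {x : ℝ} (hx : 0 < x) : θ x - φ x ∈ Ioo 0 π := by
  have hsin (y : ℝ) (hy : y ∈ Ioi (0 : ℝ)) : 0 < Real.sin (θ y - φ y) := by
    have hcross : hankelCross ν y =
        ‖hankelH ν y‖ * ‖hankelH (ν + 1) y‖ * Real.sin (θ y - φ y) := by
      have h := mul_exp_mul_conj_mul_exp ‖hankelH ν y‖ ‖hankelH (ν + 1) y‖ (θ y) (φ y) 1 1
      rw [map_one, mul_one, mul_one, mul_one, mul_one, ← hθ.polar y hy, ← hφ.polar y hy] at h
      rw [hankelCross, h, im_ofReal_mul, exp_ofReal_mul_I_im]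
    have hpos := hankelCross_pos ν hy
    rw [hcross] at hpos
    exact pos_of_mul_pos_right hpos (by positivity)
  have hlim : Tendsto (fun x => θ x - φ x) atTop (𝓝 (π / 2)) := by
    have h := (hθ.tendsto.sub hφ.tendsto).add_const (π / 2)
    rw [sub_zero, zero_add] at h
    exact h.congr fun x => by simp only [leadingPhase]; ring
  exact mem_Ioo_zero_pi_of_tendsto (hθ.continuousOn.sub hφ.continuousOn) hsin hlim
    ⟨by positivity, by linarith [pi_pos]⟩ hx

end IsHankelPhase

lemma exists_isHankelPhase_sub_leadingPhase_le (V : ℝ) : ∃ C X : ℝ, 0 < C ∧ 1 ≤ X ∧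
    ∀ (ν : ℝ) (θ : ℝ → ℝ), |ν| ≤ V → IsHankelPhase ν θ →
      ∀ x ≥ X, |θ x - leadingPhase ν x| < π / 2 ∧ |θ x - leadingPhase ν x| ≤ C / x := by
  obtain ⟨C, X, hC, hX, hbound⟩ := exists_arg_hankelH_sub_leadingPhase_le V
  refine ⟨C, X, hC, hX, fun ν θ hν hθ => hbound ν θ hν hθ.continuousOn hθ.polar ?_⟩
  have hclose : ∀ᶠ x in atTop, |θ x - leadingPhase ν x| < π :=
    (abs_zero (α := ℝ) ▸ hθ.tendsto.abs).eventually_lt_const pi_pos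
  obtain ⟨x₀, hx₀, h₀⟩ := ((eventually_ge_atTop X).and hclose).exists
  exact ⟨x₀, hx₀, h₀.le⟩

end Phase

/-! ### Behaviour near the origin -/

section Origin

lemma integral_cos_mul_pos {ν : ℝ} (hν : |ν| < 1) : 0 < ∫ θ in (0 : ℝ)..π, Real.cos (ν * θ) := by
  rcases eq_or_ne ν 0 with rfl | hν₀
  · simp [pi_pos]
  rw [intervalIntegral.integral_comp_mul_left Real.cos hν₀, integral_cos, mul_zero, Real.sin_zero,
    sub_zero, smul_eq_mul]
  obtain ⟨hν₁, hν₂⟩ := abs_lt.1 hν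
  rcases hν₀.lt_or_gt with h | h
  · exact mul_pos_of_neg_of_neg (inv_lt_zero.2 h) (Real.sin_neg_of_neg_of_neg_pi_lt
      (mul_neg_of_neg_of_pos h pi_pos) (by nlinarith [pi_pos]))
  · exact mul_pos (inv_pos.2 h) (Real.sin_pos_of_pos_of_lt_pi (mul_pos h pi_pos)
      (by nlinarith [pi_pos]))

lemma besselTail_nonneg (ν x : ℝ) : 0 ≤ besselTail ν x :=
  integral_nonneg fun _ => (Real.exp_pos _).le

lemma eventually_besselJ_pos {ν : ℝ} (hν : -1 < ν) (hν₀ : ν ≤ 0) :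
    ∀ᶠ x in 𝓝 (0 : ℝ), 0 < besselJ ν x := by
  have hcont : Continuous fun x : ℝ => ∫ θ in (0 : ℝ)..π, Real.cos (x * Real.sin θ - ν * θ) :=
    intervalIntegral.continuous_parametric_intervalIntegral_of_continuous' (by fun_prop) _ _
  have hzero : 0 < ∫ θ in (0 : ℝ)..π, Real.cos (0 * Real.sin θ - ν * θ) := by
    simpa only [zero_mul, zero_sub, Real.cos_neg] using
      integral_cos_mul_pos (abs_lt.2 ⟨hν, hν₀.trans_lt one_pos⟩)
  have hsin : Real.sin (ν * π) ≤ 0 :=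
    Real.sin_nonpos_of_nonpos_of_neg_pi_le (mul_nonpos_of_nonpos_of_nonneg hν₀ pi_pos.le)
      (by nlinarith [pi_pos])
  filter_upwards [hcont.continuousAt.eventually_const_lt hzero] with x hx
  have htail : Real.sin (ν * π) / π * besselTail ν x ≤ 0 :=
    mul_nonpos_of_nonpos_of_nonneg (div_nonpos_of_nonpos_of_nonneg hsin pi_pos.le)
      (besselTail_nonneg ν x)
  rw [besselJ, ← besselTail]
  have : 0 < 1 / π * ∫ θ in (0 : ℝ)..π, Real.cos (x * Real.sin θ - ν * θ) := by positivity
  linarith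

lemma hasDerivAt_besselJ (ν : ℝ) {x : ℝ} (hx : 0 < x) :
    HasDerivAt (besselJ ν) (besselJ (ν - 1) x - ν / x * besselJ ν x) x := by
  have hre := reCLM.hasFDerivAt.comp_hasDerivAt x (hasDerivAt_hankelH' ν hx)
  have heq : besselJ ν =ᶠ[𝓝 x] reCLM ∘ hankelH ν := by
    filter_upwards [Ioi_mem_nhds hx] with y hy using besselJ_eq_re_hankelH ν hy
  refine (hre.congr_of_eventuallyEq heq).congr_deriv ?_
  rw [besselJ_eq_re_hankelH ν hx, besselJ_eq_re_hankelH (ν - 1) hx, reCLM_apply, sub_re,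
    re_ofReal_mul]

lemma hasDerivAt_rpow_mul_besselJ (ν : ℝ) {x : ℝ} (hx : 0 < x) :
    HasDerivAt (fun y => y ^ ν * besselJ ν y) (x ^ ν * besselJ (ν - 1) x) x := by
  have hpow := Real.hasDerivAt_rpow_const (p := ν) (Or.inl hx.ne')
  refine (hpow.mul (hasDerivAt_besselJ ν hx)).congr_deriv ?_
  rw [Real.rpow_sub_one hx.ne']
  ring

lemma besselTail_le {ν x : ℝ} (hν : 0 < ν) (hx : 0 < x) : besselTail ν x ≤ 1 / ν := by
  have hexp : ∫ t in Ioi (0 : ℝ), Real.exp (-ν * t) = 1 / ν := by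
    rw [integral_exp_mul_Ioi (by linarith) 0, mul_zero, Real.exp_zero, neg_div_neg_eq]
  rw [← hexp]
  refine setIntegral_mono_on (integrableOn_exp_neg_mul_sinh ν hx) (exp_neg_integrableOn_Ioi 0 hν)
    measurableSet_Ioi fun t ht => Real.exp_le_exp.2 ?_
  linarith [mul_nonneg hx.le (Real.sinh_nonneg_iff.2 (mem_Ioi.1 ht).le)]

lemma abs_besselJ_le {ν x : ℝ} (hν : 0 < ν) (hx : 0 < x) : |besselJ ν x| ≤ 1 + 1 / ν := by
  have hosc : |1 / π * ∫ θ in (0 : ℝ)..π, Real.cos (x * Real.sin θ - ν * θ)| ≤ 1 := by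
    have h : ‖∫ θ in (0 : ℝ)..π, Real.cos (x * Real.sin θ - ν * θ)‖ ≤ 1 * |π - 0| :=
      intervalIntegral.norm_integral_le_of_norm_le_const fun θ _ => Real.abs_cos_le_one _
    rw [Real.norm_eq_abs, sub_zero, abs_of_pos pi_pos, one_mul] at h
    rwa [abs_mul, abs_of_pos (by positivity), one_div_mul_eq_div, div_le_one pi_pos]
  have htail : |Real.sin (ν * π) / π * besselTail ν x| ≤ 1 / ν := by
    have hsin : |Real.sin (ν * π) / π| ≤ 1 := by
      rw [abs_div, abs_of_pos pi_pos, div_le_one pi_pos]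
      linarith [Real.abs_sin_le_one (ν * π), pi_gt_three]
    rw [abs_mul, abs_of_nonneg (besselTail_nonneg ν x)]
    exact (mul_le_of_le_one_left (besselTail_nonneg ν x) hsin).trans (besselTail_le hν hx)
  rw [besselJ, ← besselTail]
  exact (abs_sub _ _).trans (add_le_add hosc htail)

lemma tendsto_rpow_mul_besselJ {ν : ℝ} (hν : 0 < ν) :
    Tendsto (fun x => x ^ ν * besselJ ν x) (𝓝[>] 0) (𝓝 0) := by
  have hpow : Tendsto (fun x : ℝ => x ^ ν) (𝓝[>] 0) (𝓝 0) := by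
    have h := (Real.continuousAt_rpow_const 0 ν (Or.inr hν.le)).tendsto
    rw [Real.zero_rpow hν.ne'] at h
    exact h.mono_left nhdsWithin_le_nhds
  have hbdd : IsBoundedUnder (· ≤ ·) (𝓝[>] (0 : ℝ)) (norm ∘ besselJ ν) :=
    isBoundedUnder_of_eventually_le (a := 1 + 1 / ν) (by
      filter_upwards [self_mem_nhdsWithin] with x hx using abs_besselJ_le hν hx)
  exact hpow.zero_mul_isBoundedUnder_le hbdd

lemma lt_of_strictMonoOn_of_tendsto {f : ℝ → ℝ} {a b c x : ℝ} (hf : StrictMonoOn f (Ioc a b))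
    (hlim : Tendsto f (𝓝[>] a) (𝓝 c)) (hx : x ∈ Ioc a b) : c < f x := by
  obtain ⟨y, hay, hyx⟩ := exists_between hx.1
  have hy : y ∈ Ioc a b := ⟨hay, hyx.le.trans hx.2⟩
  refine (le_of_tendsto hlim ?_).trans_lt (hf hy hx hyx)
  filter_upwards [Ioo_mem_nhdsGT hay] with z hz
  exact (hf ⟨hz.1, hz.2.le.trans hy.2⟩ hy hz.2).le

lemma besselJ_pos_of_besselJ_sub_one_pos {ν x₀ : ℝ} (hν : 0 < ν)
    (hJ : ∀ x ∈ Ioc 0 x₀, 0 < besselJ (ν - 1) x) : ∀ x ∈ Ioc 0 x₀, 0 < besselJ ν x := by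
  have hmono : StrictMonoOn (fun y => y ^ ν * besselJ ν y) (Ioc 0 x₀) := by
    refine strictMonoOn_of_deriv_pos (convex_Ioc 0 x₀) (fun y hy =>
      (hasDerivAt_rpow_mul_besselJ ν hy.1).continuousAt.continuousWithinAt) fun y hy => ?_
    have hy' := interior_subset hy
    rw [(hasDerivAt_rpow_mul_besselJ ν hy'.1).deriv]
    exact mul_pos (Real.rpow_pos_of_pos hy'.1 _) (hJ y hy')
  intro x hx
  have hpos : 0 < x ^ ν * besselJ ν x :=
    lt_of_strictMonoOn_of_tendsto (f := fun y => y ^ ν * besselJ ν y) hmono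
      (tendsto_rpow_mul_besselJ hν) hx
  exact pos_of_mul_pos_right hpos (Real.rpow_nonneg hx.1.le _)

namespace IsHankelPhase

variable {ν : ℝ} {θ : ℝ → ℝ}

lemma sub_mem_Ioo_zero_pi_of_abs_le_one (hθ : IsHankelPhase ν θ) (hν : |ν| ≤ 1) {x : ℝ}
    (hx : 0 < x) : θ x - (x - ν * π / 2 - π / 2) ∈ Ioo 0 π := by
  have hsin (y : ℝ) (hy : y ∈ Ioi (0 : ℝ)) : 0 < Real.sin (θ y - (y - ν * π / 2 - π / 2)) := by
    have hpos := im_amplitude_pos hν hy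
    rw [← norm_mul_exp_sub_mul_I (by positivity) (hankelH_eq_exp_mul_amplitude ν hy)
      (hθ.polar y hy), im_ofReal_mul, exp_ofReal_mul_I_im] at hpos
    exact pos_of_mul_pos_right hpos (norm_nonneg _)
  have hlim : Tendsto (fun y => θ y - (y - ν * π / 2 - π / 2)) atTop (𝓝 (π / 4)) := by
    have h := hθ.tendsto.add_const (π / 4)
    rw [zero_add] at h
    exact h.congr fun y => by rw [leadingPhase]; ring
  exact mem_Ioo_zero_pi_of_tendsto (hθ.continuousOn.sub (by fun_prop)) hsin hlim
    ⟨by positivity, by linarith [pi_pos]⟩ hx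

lemma abs_lt_pi_div_two_of_nonpos (hθ : IsHankelPhase ν θ) (hν : -1 ≤ ν) (hν₀ : ν ≤ 0) {x : ℝ}
    (hx : 0 < x) (hx₁ : x ≤ 1) (hJ : 0 < besselJ ν x) : |θ x| < π / 2 := by
  obtain ⟨hlower, hupper⟩ :=
    hθ.sub_mem_Ioo_zero_pi_of_abs_le_one (abs_le.2 ⟨hν, by linarith⟩) hx
  have hνπ : 0 ≤ -ν * π := mul_nonneg (by linarith) pi_pos.le
  have hνπ' : -ν * π ≤ 1 * π := by gcongr; linarith
  refine abs_lt_pi_div_two_of_cos_pos (abs_le.2 ⟨?_, ?_⟩) (hθ.cos_pos hx hJ) <;>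
    linarith [pi_gt_three]

end IsHankelPhase

lemma exists_abs_hankelPhase_lt_of_nonpos {ν : ℝ} (hν : -1 < ν) (hν₀ : ν ≤ 0) :
    ∃ x₀ > 0, ∀ θ, IsHankelPhase ν θ → ∀ x ∈ Ioc 0 x₀, |θ x| < π / 2 := by
  obtain ⟨δ, hδ, hJ⟩ := Metric.eventually_nhds_iff.1 (eventually_besselJ_pos hν hν₀)
  refine ⟨min 1 (δ / 2), by positivity, fun θ hθ x hx => ?_⟩
  refine hθ.abs_lt_pi_div_two_of_nonpos hν.le hν₀ hx.1 (hx.2.trans (min_le_left _ _)) (hJ ?_)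
  rw [Real.dist_eq, sub_zero, abs_of_pos hx.1]
  linarith [hx.2.trans (min_le_right 1 (δ / 2))]

lemma exists_abs_hankelPhase_lt_add_one {ν : ℝ} (hν : -1 < ν)
    (h : ∃ x₀ > 0, ∀ θ, IsHankelPhase ν θ → ∀ x ∈ Ioc 0 x₀, |θ x| < π / 2) :
    ∃ x₀ > 0, ∀ φ, IsHankelPhase (ν + 1) φ → ∀ x ∈ Ioc 0 x₀, |φ x| < π / 2 := by
  obtain ⟨x₀, hx₀, hsmall⟩ := h
  obtain ⟨θ, hθ⟩ := exists_isHankelPhase ν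
  have hJ (x : ℝ) (hx : x ∈ Ioc 0 x₀) : 0 < besselJ ν x := by
    rw [hθ.besselJ_eq hx.1]
    exact mul_pos (norm_pos_iff.2 (hankelH_ne_zero ν hx.1))
      (Real.cos_pos_of_mem_Ioo (abs_lt.1 (hsmall θ hθ x hx)))
  have hJ' : ∀ x ∈ Ioc 0 x₀, 0 < besselJ (ν + 1) x :=
    besselJ_pos_of_besselJ_sub_one_pos (by linarith) (by rwa [add_sub_cancel_right])
  refine ⟨x₀, hx₀, fun φ hφ x hx => ?_⟩
  obtain ⟨hlower, hupper⟩ := abs_lt.1 (hsmall θ hθ x hx)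
  obtain ⟨hdiff, hdiff'⟩ := hθ.sub_mem_Ioo_zero_pi hφ hx.1
  refine abs_lt_pi_div_two_of_cos_pos (abs_le.2 ⟨?_, ?_⟩) (hφ.cos_pos hx.1 (hJ' x hx)) <;>
    linarith [pi_pos]

lemma exists_abs_hankelPhase_lt {ν : ℝ} (hν : -1 < ν) :
    ∃ x₀ > 0, ∀ θ, IsHankelPhase ν θ → ∀ x ∈ Ioc 0 x₀, |θ x| < π / 2 := by
  obtain ⟨n, hn⟩ := exists_nat_ge ν
  induction n generalizing ν with
  | zero => exact exists_abs_hankelPhase_lt_of_nonpos hν (by simpa using hn)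
  | succ n ih =>
    rcases le_or_gt ν 0 with hν₀ | hν₀
    · exact exists_abs_hankelPhase_lt_of_nonpos hν hν₀
    · have hprev : -1 < ν - 1 := by linarith
      have hle : ν - 1 ≤ n := by push_cast at hn; linarith
      simpa using exists_abs_hankelPhase_lt_add_one hprev (ih hprev hle)

end Origin

/-! ### Zeros -/

section Zeros

namespace IsHankelPhase

variable {ν : ℝ} {θ : ℝ → ℝ}

lemma neg_pi_div_two_lt (hθ : IsHankelPhase ν θ) (hν : -1 < ν) {x : ℝ} (hx : 0 < x) :
    -(π / 2) < θ x := by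
  obtain ⟨x₀, hx₀, hsmall⟩ := exists_abs_hankelPhase_lt hν
  rcases le_or_gt x x₀ with hle | hlt
  · exact (abs_lt.1 (hsmall θ hθ x ⟨hx, hle⟩)).1
  · exact (abs_lt.1 (hsmall θ hθ x₀ ⟨hx₀, le_rfl⟩)).1.trans (hθ.strictMonoOn hx₀ hx hlt)

lemma ncard_zeros (hθ : IsHankelPhase ν θ) (hν : -1 < ν) {j : ℝ} (hj : 0 < j) {m : ℕ}
    (hm : θ j = (2 * m + 1) * π / 2) :
    {x : ℝ | 0 < x ∧ x < j ∧ besselJ ν x = 0}.ncard = m := by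
  obtain ⟨x₀, hx₀, hsmall⟩ := exists_abs_hankelPhase_lt hν
  have hzeros : {x : ℝ | 0 < x ∧ x < j ∧ besselJ ν x = 0} =
      {x : ℝ | 0 < x ∧ x < j ∧ Real.cos (θ x) = 0} :=
    Set.ext fun x => and_congr_right fun hx => and_congr_right fun _ => hθ.besselJ_eq_zero_iff hx
  rw [hzeros]
  exact ncard_zeros_cos_comp hθ.continuousOn hθ.strictMonoOn
    (fun x hx => hθ.neg_pi_div_two_lt hν hx)
    ⟨x₀, hx₀, (abs_lt.1 (hsmall θ hθ x₀ ⟨hx₀, le_rfl⟩)).2⟩ hj hm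

lemma apply_isKthZero (hθ : IsHankelPhase ν θ) (hν : -1 < ν) {k : ℕ} (hk : 1 ≤ k) {j : ℝ}
    (hj : IsKthZero ν k j) : θ j = (k - 1 / 2) * π := by
  obtain ⟨hj₀, hJ, hcard⟩ := hj
  obtain ⟨m, hm⟩ := exists_nat_eq_of_cos_eq_zero ((hθ.besselJ_eq_zero_iff hj₀).1 hJ)
    (hθ.neg_pi_div_two_lt hν hj₀)
  rw [hθ.ncard_zeros hν hj₀ hm] at hcard
  rw [hm, hcard, Nat.cast_sub hk]
  push_cast
  ring

end IsHankelPhase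

/-- McMahon's expansion of the zeros to leading order. -/
lemma exists_abs_isKthZero_sub_le (V : ℝ) : ∃ K C : ℝ, 4 ≤ K ∧ 0 < C ∧
    ∀ ν, -1 < ν → ν ≤ V → ∀ k : ℕ, K ≤ k → ∀ j, IsKthZero ν k j →
      ν + k ≤ j ∧ |j / π - ν / 2 - (k - 1 / 4)| ≤ C / j := by
  obtain ⟨C, X, hC, hX, hbound⟩ := exists_isHankelPhase_sub_leadingPhase_le (max V 1)
  refine ⟨X + 4, C, by linarith, hC, fun ν hν hνV k hk j hj => ?_⟩
  have hπ := pi_gt_three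
  have hνπ : -1 * π ≤ ν * π := by gcongr
  have hkπ : (k - 5 / 4) * 3 ≤ (k - 5 / 4) * π := by gcongr; linarith
  obtain ⟨θ, hθ⟩ := exists_isHankelPhase ν
  have hclose := hbound ν θ
    (abs_le.2 ⟨by linarith [le_max_right V 1], hνV.trans (le_max_left _ _)⟩) hθ
  have hθj : θ j = (k - 1 / 2) * π := by
    have : (1 : ℝ) ≤ k := by linarith
    exact hθ.apply_isKthZero hν (mod_cast this) hj
  have hXj : X ≤ j := by
    by_contra! hlt
    have hlt' := hθ.strictMonoOn hj.1 (mem_Ioi.2 (by linarith)) hlt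
    have hupper := (abs_lt.1 (hclose X le_rfl).1).2
    rw [leadingPhase] at hupper
    linarith
  obtain ⟨hlt, hle⟩ := hclose j hXj
  rw [hθj] at hlt hle
  constructor
  · have hupper := (abs_lt.1 hlt).2
    have hν₂ : (ν + 1) * 2 ≤ (ν + 1) * π := by gcongr <;> linarith
    rw [leadingPhase] at hupper
    linarith
  · have hphase : j / π - ν / 2 - (k - 1 / 4) = -(((k - 1 / 2) * π - leadingPhase ν j) / π) := by
      rw [leadingPhase]
      field_simp
      ring
    rw [hphase, abs_neg, abs_div, abs_of_pos pi_pos]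
    exact (div_le_self (abs_nonneg _) (by linarith)).trans hle

lemma abs_gfun_sub_le {t : ℝ} (ht : |t| ≤ 1) : |gfun t - (1 / π - t / 2)| ≤ t ^ 2 := by
  obtain ⟨ht₁, ht₂⟩ := abs_le.1 ht
  have ht_sq : t ^ 2 ≤ 1 := (sq_le_one_iff_abs_le_one t).2 ht
  have hsqrt_le : √(1 - t ^ 2) ≤ 1 := Real.sqrt_le_one.2 (by linarith [sq_nonneg t])
  have hle_sqrt : 1 - t ^ 2 ≤ √(1 - t ^ 2) :=
    Real.le_sqrt_of_sq_le (pow_le_of_le_one (by linarith) (by linarith [sq_nonneg t]) two_ne_zero)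
  have harcsin : |t * Real.arcsin t| ≤ π / 2 * t ^ 2 := by
    have h := abs_le_pi_div_two_mul_abs_sin
      (abs_le.2 ⟨Real.neg_pi_div_two_le_arcsin t, Real.arcsin_le_pi_div_two t⟩)
    rw [Real.sin_arcsin ht₁ ht₂] at h
    calc |t * Real.arcsin t| = |t| * |Real.arcsin t| := abs_mul _ _
      _ ≤ |t| * (π / 2 * |t|) := by gcongr
      _ = π / 2 * t ^ 2 := by rw [← sq_abs t]; ring
  have hsplit : gfun t - (1 / π - t / 2) = (√(1 - t ^ 2) - 1 + t * Real.arcsin t) / π := by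
    rw [gfun, Real.arccos]
    field_simp
    ring
  have hπ : 2 * t ^ 2 ≤ π * t ^ 2 := by gcongr; exact two_le_pi
  rw [hsplit, abs_div, abs_of_pos pi_pos, div_le_iff₀ pi_pos]
  calc |√(1 - t ^ 2) - 1 + t * Real.arcsin t| ≤ |√(1 - t ^ 2) - 1| + |t * Real.arcsin t| :=
        abs_add_le _ _
    _ ≤ t ^ 2 + π / 2 * t ^ 2 :=
        add_le_add (abs_le.2 ⟨by linarith, by linarith [sq_nonneg t]⟩) harcsin
    _ ≤ t ^ 2 * π := by linarith

lemma abs_mul_gfun_div_sub_le {ν j : ℝ} (hj : 0 < j) (hν : |ν| ≤ j) :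
    |j * gfun (ν / j) - (j / π - ν / 2)| ≤ ν ^ 2 / j := by
  have hbound : |gfun (ν / j) - (1 / π - ν / j / 2)| ≤ (ν / j) ^ 2 :=
    abs_gfun_sub_le (by rwa [abs_div, abs_of_pos hj, div_le_one hj])
  calc |j * gfun (ν / j) - (j / π - ν / 2)| = j * |gfun (ν / j) - (1 / π - ν / j / 2)| := by
        rw [← abs_of_pos hj, ← abs_mul, abs_of_pos hj]
        congr 1
        field_simp
    _ ≤ j * (ν / j) ^ 2 := by gcongr
    _ = ν ^ 2 / j := by field_simp

end Zeros

end BesselZeros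

open BesselZeros in
theorem zero_approx_small_nu_general (V : ℝ) :
    ∃ K C : ℝ, 0 < K ∧ 0 < C ∧ ∀ ν : ℝ, -1 < ν → ν ≤ V → ∀ k : ℕ, K ≤ (k : ℝ) → ∀ j : ℝ,
      IsKthZero ν k j →
      |j * gfun (ν / j) - ((k : ℝ) - 1 / 4)| ≤ C / (ν + (k : ℝ)) := by
  obtain ⟨K, C, hK, hC, hMcMahon⟩ := exists_abs_isKthZero_sub_le V
  refine ⟨K, (max V 1) ^ 2 + C, by linarith, by positivity, fun ν hν hνV k hk j hj => ?_⟩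
  obtain ⟨hle, hclose⟩ := hMcMahon ν hν hνV k hk j hj
  have hν_sq : ν ^ 2 ≤ (max V 1) ^ 2 :=
    sq_le_sq' (by linarith [le_max_right V 1]) (hνV.trans (le_max_left _ _))
  have hνj : |ν| ≤ j := abs_le.2 ⟨by linarith, by linarith⟩
  calc |j * gfun (ν / j) - (k - 1 / 4)|
      ≤ |j * gfun (ν / j) - (j / π - ν / 2)| + |j / π - ν / 2 - (k - 1 / 4)| := abs_sub_le _ _ _
    _ ≤ ν ^ 2 / j + C / j := add_le_add (abs_mul_gfun_div_sub_le hj.1 hνj) hclose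
    _ = (ν ^ 2 + C) / j := (add_div _ _ _).symm
    _ ≤ ((max V 1) ^ 2 + C) / (ν + k) := by gcongr; linarith

/-- for bounded `0 ≤ ν ≤ V` and large `k`, the zeros satisfy
`j g(ν/j) = k - 1/4 + O_V(1/(ν+k))`. -/
theorem zero_approx_small_nu (V : ℝ) (hV : 0 < V) :
    ∃ K C : ℝ, 0 < K ∧ 0 < C ∧ ∀ ν : ℝ, 0 ≤ ν → ν ≤ V → ∀ k : ℕ, K ≤ (k : ℝ) → ∀ j : ℝ,
      IsKthZero ν k j →
      |j * gfun (ν / j) - ((k : ℝ) - 1 / 4)| ≤ C / (ν + (k : ℝ)) := by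
  obtain ⟨K, C, hK, hC, hbound⟩ := zero_approx_small_nu_general V
  exact ⟨K, C, hK, hC, fun ν hν => hbound ν (neg_one_lt_zero.trans_le hν)⟩
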